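/- arXiv:quant-ph/0406162 — 3 statements merged into one kernel-verified Lean document; each statement's English description precedes it below -/
import Mathlib

section
/- Let ρ^{ABC} be a state of a tripartite quantum system on finite-dimensional Hilbert spaces with I(A;C|B) = 0. Then S(AC) ≥ S(C), i.e. the conditional entropy S(A|C) is nonnegative. -/
/-!
The theorem holds because of the inequality
`2 (S(AC) - S(C)) + I(A;C|B) ≥ 0`, valid for every tripartite state. It is the sum of

* strong subadditivity with pivot `C`: `S(ABC) + S(C) ≤ S(AC) + S(BC)` (`S3_ssa_pivotC`), and
* weak monotonicity: `S(B) + S(C) ≤ S(AB) + S(AC)` (`S3_weak_monotonicity`).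

Weak monotonicity is strong subadditivity for the marginal on `ABD` of a purification of `ρ` by a
system `D`, since complementary marginals of a pure state have the same nonzero spectrum
(`vNEntropy_dual`).

Strong subadditivity follows from monotonicity of the relative entropy
`D(ρ‖σ) = Tr ρ (log ρ - log σ)` under partial traces, applied to `ρ_ABC` and `1 ⊗ ρ_BC` when `C` is
traced out. For invertible `ρ`, `σ` with eigenvalues `p`, `q` and overlaps `|w i j|²` of the
eigenbases, put `F_t = ∑ |w i j|² p i ² / (q j + t p i)`. Then

* `F_t(ρ, σ) = sup_X 2 Re Tr ρX - Tr σXX* - t Tr ρX*X` (`quadForm_le`, `exists_quadForm_eq`), so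
  inserting operators of the form `X ⊗ 1` shows that `F_t` decreases under partial traces;
* `∫₀ᵀ F_t dt = ∑ |w i j|² p i (log (q j + T p i) - log (q j))`, which is
  `log T · Tr ρ + D(ρ‖σ) + o(1)` as `T → ∞`, so the monotonicity passes to `D` (`relEnt_mono`).

Singular states are reached by replacing `ρ` with `ρ + ε` and letting `ε → 0`.
-/

open scoped BigOperators ComplexOrder

/-- Von Neumann entropy (base 2) of a matrix: for a Hermitian matrix, the Shannon
entropy of its eigenvalues; junk value `0` for non-Hermitian matrices. -/
noncomputable def vNEntropy {n : Type*} [Fintype n] [DecidableEq n] (M : Matrix n n ℂ) : ℝ :=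
  if h : M.IsHermitian then -∑ i, (h.eigenvalues i) * Real.logb 2 (h.eigenvalues i) else 0

/-- A density matrix: positive semidefinite with trace one. -/
def IsState {n : Type*} [Fintype n] [DecidableEq n] (M : Matrix n n ℂ) : Prop :=
  M.PosSemidef ∧ M.trace = 1

section Tri

variable {A B C : Type*} [Fintype A] [DecidableEq A] [Fintype B] [DecidableEq B]
  [Fintype C] [DecidableEq C]
  (ρ : Matrix (A × B × C) (A × B × C) ℂ)

/-- The reduced state on `A ⊗ C` of a tripartite state. -/
noncomputable def redAC : Matrix (A × C) (A × C) ℂ :=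
  Matrix.of fun p q : A × C => ∑ b, ρ (p.1, b, p.2) (q.1, b, q.2)

/-- Entropies of the marginals of a tripartite state. -/
noncomputable def S3A : ℝ :=
  vNEntropy (Matrix.of fun a a' : A => ∑ b, ∑ c, ρ (a, b, c) (a', b, c))
noncomputable def S3B : ℝ :=
  vNEntropy (Matrix.of fun b b' : B => ∑ a, ∑ c, ρ (a, b, c) (a, b', c))
noncomputable def S3C : ℝ :=
  vNEntropy (Matrix.of fun c c' : C => ∑ a, ∑ b, ρ (a, b, c) (a, b, c'))
noncomputable def S3AB : ℝ :=
  vNEntropy (Matrix.of fun p q : A × B => ∑ c, ρ (p.1, p.2, c) (q.1, q.2, c))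
noncomputable def S3AC : ℝ := vNEntropy (redAC ρ)
noncomputable def S3BC : ℝ :=
  vNEntropy (Matrix.of fun p q : B × C => ∑ a, ρ (a, p.1, p.2) (a, q.1, q.2))
noncomputable def S3ABC : ℝ := vNEntropy ρ

end Tri

open Matrix

/-! ### Diagonalizations and entropy -/

/-- `M = U diag(p) Uᴴ` with `U` unitary and real eigenvalues `p`. -/
def Diagonalizes {n : Type*} [Fintype n] [DecidableEq n] (M U : Matrix n n ℂ) (p : n → ℝ) : Prop :=
  U * Uᴴ = 1 ∧ Uᴴ * U = 1 ∧ M = U * diagonal (fun i => (p i : ℂ)) * Uᴴ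

/-- Entropy with the natural logarithm, read off from the roots of the characteristic polynomial.
This form depends on the spectrum only and makes sense without a proof of hermiticity. -/
noncomputable def charEnt {n : Type*} [Fintype n] [DecidableEq n] (M : Matrix n n ℂ) : ℝ :=
  (M.charpoly.roots.map fun z => Real.negMulLog z.re).sum

lemma Diagonalizes.charEnt_eq {n : Type*} [Fintype n] [DecidableEq n] {M U : Matrix n n ℂ} {p : n → ℝ}
    (h : Diagonalizes M U p) : charEnt M = ∑ i, Real.negMulLog (p i) := by
  obtain ⟨-, h2, rfl⟩ := h
  have : (U * diagonal (fun i => (p i : ℂ)) * Uᴴ).charpoly =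
      (diagonal (fun i => (p i : ℂ))).charpoly := by
    rw [charpoly_mul_comm, ← Matrix.mul_assoc, h2, Matrix.one_mul]
  rw [charEnt, this, charpoly_diagonal, Polynomial.roots_prod]
  · simp
  · exact Finset.prod_ne_zero_iff.2 fun i _ => Polynomial.X_sub_C_ne_zero _

lemma diagonalizes_eigenvalues {n : Type*} [Fintype n] [DecidableEq n] {M : Matrix n n ℂ}
    (h : M.IsHermitian) : Diagonalizes M (h.eigenvectorUnitary : Matrix n n ℂ) h.eigenvalues := by
  refine ⟨?_, ?_, ?_⟩
  · exact Unitary.coe_mul_star_self h.eigenvectorUnitary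
  · exact Unitary.coe_star_mul_self h.eigenvectorUnitary
  · exact h.spectral_theorem

lemma vNEntropy_eq_charEnt {n : Type*} [Fintype n] [DecidableEq n] {M : Matrix n n ℂ}
    (h : M.IsHermitian) : vNEntropy M = charEnt M / Real.log 2 := by
  rw [vNEntropy, dif_pos h, (diagonalizes_eigenvalues h).charEnt_eq, Finset.sum_div,
    ← Finset.sum_neg_distrib]
  refine Finset.sum_congr rfl fun i _ => ?_
  rw [Real.negMulLog, Real.logb]; ring

/-- The spectra of `NK` and `KN` differ only by zeros, which contribute `0 log 0 = 0`. -/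
lemma charEnt_mul_comm {m n : Type*} [Fintype n] [DecidableEq n] [Fintype m] [DecidableEq m]
    (N : Matrix m n ℂ) (K : Matrix n m ℂ) : charEnt (N * K) = charEnt (K * N) := by
  have h := congrArg (fun f : Polynomial ℂ =>
    (f.roots.map fun z => Real.negMulLog z.re).sum) (charpoly_mul_comm' N K)
  beta_reduce at h
  rw [Polynomial.roots_mul, Polynomial.roots_mul] at h
  · simpa [charEnt, Multiset.map_nsmul, Multiset.sum_nsmul] using h
  · exact mul_ne_zero (pow_ne_zero _ Polynomial.X_ne_zero) (charpoly_monic _).ne_zero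
  · exact mul_ne_zero (pow_ne_zero _ Polynomial.X_ne_zero) (charpoly_monic _).ne_zero

/-- The two marginals of the pure state with coefficient matrix `N` are `N Nᴴ` and `(Nᴴ N)ᵀ`;
they have the same entropy. -/
lemma vNEntropy_dual {m n : Type*} [Fintype n] [DecidableEq n] [Fintype m] [DecidableEq m]
    (N : Matrix m n ℂ) : vNEntropy (N * Nᴴ) = vNEntropy (Nᴴ * N)ᵀ := by
  rw [vNEntropy_eq_charEnt (isHermitian_mul_conjTranspose_self N),
    vNEntropy_eq_charEnt (isHermitian_conjTranspose_mul_self N).transpose, charEnt_mul_comm,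
    charEnt, charEnt, charpoly_transpose]

lemma vNEntropy_submatrix {m n : Type*} [Fintype n] [DecidableEq n] [Fintype m] [DecidableEq m]
    (e : m ≃ n) {M : Matrix n n ℂ} (h : M.IsHermitian) :
    vNEntropy (M.submatrix e e) = vNEntropy M := by
  rw [vNEntropy_eq_charEnt h, vNEntropy_eq_charEnt (h.submatrix e), charEnt, charEnt]
  have := charpoly_reindex e.symm M
  rw [reindex_apply, Equiv.symm_symm] at this
  rw [this]

lemma Diagonalizes.add_smul_one {n : Type*} [Fintype n] [DecidableEq n] {M U : Matrix n n ℂ} {p : n → ℝ}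
    (h : Diagonalizes M U p) (ε : ℝ) : Diagonalizes (M + (ε : ℂ) • 1) U (fun i => p i + ε) := by
  obtain ⟨h1, h2, h3⟩ := h
  refine ⟨h1, h2, ?_⟩
  have : diagonal (fun i => ((p i + ε : ℝ) : ℂ)) = diagonal (fun i => (p i : ℂ)) + (ε : ℂ) • 1 := by
    ext i j; by_cases hij : i = j <;> simp [hij]
  rw [this, Matrix.mul_add, Matrix.add_mul, ← h3]
  simp [h1]

lemma continuous_charEnt_add {n : Type*} [Fintype n] [DecidableEq n] {M : Matrix n n ℂ}
    (h : M.IsHermitian) : Continuous fun ε : ℝ => charEnt (M + (ε : ℂ) • 1) := by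
  simp_rw [fun ε => ((diagonalizes_eigenvalues h).add_smul_one ε).charEnt_eq]
  exact continuous_finsetSum _ fun i _ => Real.continuous_negMulLog.comp (by fun_prop)

/-! ### Monotonicity of relative entropy -/

/-- The functional `2 Re Tr ρX - Re Tr σXX* - t Re Tr ρX*X`, linear in the pair `(ρ, σ)`, whose
supremum over `X` is `resolventSum`. -/
noncomputable def quadForm {n : Type*} [Fintype n] (t : ℝ) (ρ σ X : Matrix n n ℂ) : ℝ :=
  2 * (ρ * X).trace.re - (σ * (X * Xᴴ)).trace.re - t * (ρ * (Xᴴ * X)).trace.re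

/-- The sum `∑ |w i j|² p i ² / (q j + t p i)`, with `w = Uᴴ V` the overlaps of the eigenbases of
`ρ = U diag(p) Uᴴ` and `σ = V diag(q) Vᴴ`. -/
noncomputable def resolventSum {n : Type*} [Fintype n] (t : ℝ) (U V : Matrix n n ℂ)
    (p q : n → ℝ) : ℝ :=
  ∑ i, ∑ j, Complex.normSq ((Uᴴ * V) i j) * (p i ^ 2 / (q j + t * p i))

lemma Diagonalizes.trace_mul {n : Type*} [Fintype n] [DecidableEq n] {M U : Matrix n n ℂ}
    {p : n → ℝ} (h : Diagonalizes M U p) (Z : Matrix n n ℂ) :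
    (M * Z).trace = ∑ i, (p i : ℂ) * (Uᴴ * Z * U) i i := by
  obtain ⟨-, -, rfl⟩ := h
  rw [Matrix.mul_assoc, Matrix.mul_assoc, Matrix.trace_mul_comm, Matrix.mul_assoc, trace]
  simp [diagonal_mul, Matrix.mul_assoc]

/-- In the eigenbases of `ρ` and `σ` the functional `quadForm` splits into independent quadratic
polynomials in the entries of `Vᴴ X U`. -/
lemma quadForm_eq {n : Type*} [Fintype n] [DecidableEq n] {ρ σ U V : Matrix n n ℂ}
    {p q : n → ℝ} (hρ : Diagonalizes ρ U p) (hσ : Diagonalizes σ V q) (t : ℝ) (X : Matrix n n ℂ) :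
    quadForm t ρ σ X = ∑ i, ∑ j, (2 * (p i * ((Uᴴ * V) i j * (Vᴴ * X * U) j i).re)
      - (q j + t * p i) * Complex.normSq ((Vᴴ * X * U) j i)) := by
  have e1 : (ρ * X).trace.re = ∑ i, ∑ j, p i * ((Uᴴ * V) i j * (Vᴴ * X * U) j i).re := by
    rw [hρ.trace_mul]
    have : Uᴴ * X * U = (Uᴴ * V) * (Vᴴ * X * U) := by
      calc Uᴴ * X * U = Uᴴ * (V * Vᴴ) * X * U := by rw [hσ.1, Matrix.mul_one]
        _ = _ := by simp only [Matrix.mul_assoc]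
    simp only [this, Matrix.mul_apply (M := Uᴴ * V), Complex.re_sum, Complex.re_ofReal_mul,
      Finset.mul_sum]
  have e2 : (σ * (X * Xᴴ)).trace.re = ∑ i, ∑ j, q j * Complex.normSq ((Vᴴ * X * U) j i) := by
    rw [hσ.trace_mul]
    have : Vᴴ * (X * Xᴴ) * V = (Vᴴ * X * U) * (Vᴴ * X * U)ᴴ := by
      calc Vᴴ * (X * Xᴴ) * V = Vᴴ * X * (U * Uᴴ) * Xᴴ * V := by
            rw [hρ.1, Matrix.mul_one]; simp only [Matrix.mul_assoc]
        _ = _ := by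
          simp only [Matrix.mul_assoc, conjTranspose_mul, conjTranspose_conjTranspose]
    rw [Finset.sum_comm]
    simp only [this, Matrix.mul_apply (M := Vᴴ * X * U), Complex.re_sum, Complex.re_ofReal_mul,
      Finset.mul_sum, conjTranspose_apply, ← starRingEnd_apply, Complex.mul_conj, Complex.ofReal_re]
  have e3 : (ρ * (Xᴴ * X)).trace.re = ∑ i, ∑ j, p i * Complex.normSq ((Vᴴ * X * U) j i) := by
    rw [hρ.trace_mul]
    have : Uᴴ * (Xᴴ * X) * U = (Vᴴ * X * U)ᴴ * (Vᴴ * X * U) := by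
      calc Uᴴ * (Xᴴ * X) * U = Uᴴ * Xᴴ * (V * Vᴴ) * X * U := by
            rw [hσ.1, Matrix.mul_one]; simp only [Matrix.mul_assoc]
        _ = _ := by
          simp only [Matrix.mul_assoc, conjTranspose_mul, conjTranspose_conjTranspose]
    simp only [this, Matrix.mul_apply (M := (Vᴴ * X * U)ᴴ), Complex.re_sum, Complex.re_ofReal_mul,
      Finset.mul_sum, conjTranspose_apply, ← starRingEnd_apply, mul_comm (starRingEnd ℂ _),
      Complex.mul_conj, Complex.ofReal_re]
  rw [quadForm, e1, e2, e3]
  simp only [Finset.mul_sum, ← Finset.sum_sub_distrib]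
  refine Finset.sum_congr rfl fun i _ => Finset.sum_congr rfl fun j _ => ?_
  ring

lemma quadForm_le {n : Type*} [Fintype n] [DecidableEq n] {ρ σ U V : Matrix n n ℂ}
    {p q : n → ℝ} (hρ : Diagonalizes ρ U p) (hσ : Diagonalizes σ V q) (hp : ∀ i, 0 < p i)
    (hq : ∀ i, 0 < q i) {t : ℝ} (ht : 0 ≤ t) (X : Matrix n n ℂ) :
    quadForm t ρ σ X ≤ resolventSum t U V p q := by
  rw [quadForm_eq hρ hσ, resolventSum]
  refine Finset.sum_le_sum fun i _ => Finset.sum_le_sum fun j _ => ?_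
  generalize (Uᴴ * V) i j = w
  generalize (Vᴴ * X * U) j i = y
  have hd : 0 < q j + t * p i := add_pos_of_pos_of_nonneg (hq j) (mul_nonneg ht (hp i).le)
  rw [← mul_div_assoc, le_div_iff₀ hd]
  simp only [Complex.mul_re, Complex.normSq_apply]
  generalize q j + t * p i = d
  nlinarith [sq_nonneg (p i * w.re - d * y.re), sq_nonneg (p i * w.im + d * y.im)]

/-- The supremum of `quadForm` is attained where each of the quadratic polynomials of `quadForm_eq`
is maximal. -/
lemma exists_quadForm_eq {n : Type*} [Fintype n] [DecidableEq n] {ρ σ U V : Matrix n n ℂ}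
    {p q : n → ℝ} (hρ : Diagonalizes ρ U p) (hσ : Diagonalizes σ V q) (hp : ∀ i, 0 < p i)
    (hq : ∀ i, 0 < q i) {t : ℝ} (ht : 0 ≤ t) :
    ∃ X, quadForm t ρ σ X = resolventSum t U V p q := by
  let Y : Matrix n n ℂ := Matrix.of fun j i =>
    ((p i / (q j + t * p i) : ℝ) : ℂ) * starRingEnd ℂ ((Uᴴ * V) i j)
  refine ⟨V * Y * Uᴴ, ?_⟩
  have hY : Vᴴ * (V * Y * Uᴴ) * U = Y := by
    calc Vᴴ * (V * Y * Uᴴ) * U = (Vᴴ * V) * Y * (Uᴴ * U) := by simp only [Matrix.mul_assoc]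
      _ = Y := by rw [hσ.2.1, hρ.2.1, Matrix.one_mul, Matrix.mul_one]
  rw [quadForm_eq hρ hσ, resolventSum, hY]
  refine Finset.sum_congr rfl fun i _ => Finset.sum_congr rfl fun j _ => ?_
  have hd : 0 < q j + t * p i := add_pos_of_pos_of_nonneg (hq j) (mul_nonneg ht (hp i).le)
  simp only [Y, Matrix.of_apply]
  generalize (Uᴴ * V) i j = w
  generalize q j + t * p i = d at *
  rw [mul_left_comm w, Complex.mul_conj, Complex.normSq_mul, Complex.normSq_conj,
    Complex.normSq_ofReal, ← Complex.ofReal_mul, Complex.ofReal_re]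
  field_simp
  norm_num

/-- Relative entropy `Tr ρ (log ρ - log σ)` (natural logarithm) of `ρ = U diag(p) Uᴴ` and
`σ = V diag(q) Vᴴ`, expressed through their diagonalizations. -/
noncomputable def relEnt {n : Type*} [Fintype n] (U V : Matrix n n ℂ) (p q : n → ℝ) : ℝ :=
  ∑ i, ∑ j, Complex.normSq ((Uᴴ * V) i j) * (p i * (Real.log (p i) - Real.log (q j)))

/-- The integral of `resolventSum s U V p q` over `s` from `0` to `t`, in closed form. -/
noncomputable def truncRelEnt {n : Type*} [Fintype n] (U V : Matrix n n ℂ) (p q : n → ℝ)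
    (t : ℝ) : ℝ :=
  ∑ i, ∑ j, Complex.normSq ((Uᴴ * V) i j) * (p i * (Real.log (q j + t * p i) - Real.log (q j)))

lemma hasDerivAt_truncRelEnt {n : Type*} [Fintype n] (U V : Matrix n n ℂ) {p q : n → ℝ}
    (hp : ∀ i, 0 < p i) (hq : ∀ i, 0 < q i) {t : ℝ} (ht : 0 ≤ t) :
    HasDerivAt (truncRelEnt U V p q) (resolventSum t U V p q) t := by
  unfold truncRelEnt resolventSum
  refine HasDerivAt.fun_sum fun i _ => HasDerivAt.fun_sum fun j _ => ?_
  have hd : 0 < q j + t * p i := add_pos_of_pos_of_nonneg (hq j) (mul_nonneg ht (hp i).le)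
  have h1 : HasDerivAt (fun t : ℝ => q j + t * p i) (p i) t := by
    simpa using ((hasDerivAt_id t).mul_const (p i)).const_add (q j)
  have h2 := ((((h1.log hd.ne').sub_const (Real.log (q j))).const_mul (p i))).const_mul
    (Complex.normSq ((Uᴴ * V) i j))
  refine h2.congr_deriv ?_
  ring

/-- The overlap matrix `Uᴴ V` is unitary, so its rows are unit vectors. -/
lemma normSq_row_sum {n : Type*} [Fintype n] [DecidableEq n] {ρ σ U V : Matrix n n ℂ}
    {p q : n → ℝ} (hρ : Diagonalizes ρ U p) (hσ : Diagonalizes σ V q) (i : n) :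
    ∑ j, Complex.normSq ((Uᴴ * V) i j) = 1 := by
  have h : (Uᴴ * V) * (Uᴴ * V)ᴴ = 1 := by
    calc (Uᴴ * V) * (Uᴴ * V)ᴴ = Uᴴ * (V * Vᴴ) * U := by
          simp only [Matrix.mul_assoc, conjTranspose_mul, conjTranspose_conjTranspose]
      _ = 1 := by rw [hσ.1, Matrix.mul_one, hρ.2.1]
  have h2 := congrArg Complex.re (congrFun (congrFun h i) i)
  simpa [Matrix.mul_apply (M := Uᴴ * V), conjTranspose_apply, ← starRingEnd_apply,
    Complex.mul_conj, -conjTranspose_mul] using h2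

lemma Diagonalizes.trace_re {n : Type*} [Fintype n] [DecidableEq n] {M U : Matrix n n ℂ}
    {p : n → ℝ} (h : Diagonalizes M U p) : M.trace.re = ∑ i, p i := by
  have := h.trace_mul 1
  rw [Matrix.mul_one] at this
  simp [this, h.2.1]

lemma tendsto_truncRelEnt {n : Type*} [Fintype n] [DecidableEq n] {ρ σ U V : Matrix n n ℂ}
    {p q : n → ℝ} (hρ : Diagonalizes ρ U p) (hσ : Diagonalizes σ V q)
    (hp : ∀ i, 0 < p i) (hq : ∀ i, 0 < q i) :
    Filter.Tendsto (fun t => truncRelEnt U V p q t - Real.log t * ρ.trace.re)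
      Filter.atTop (nhds (relEnt U V p q)) := by
  have key : ∀ i j, Filter.Tendsto (fun t : ℝ => Complex.normSq ((Uᴴ * V) i j) *
      (p i * (Real.log (q j / t + p i) - Real.log (q j)))) Filter.atTop
      (nhds (Complex.normSq ((Uᴴ * V) i j) * (p i * (Real.log (p i) - Real.log (q j))))) := by
    intro i j
    refine ((Filter.Tendsto.sub_const ?_ _).const_mul _).const_mul _
    refine Filter.Tendsto.log ?_ (hp i).ne'
    simpa using (Filter.Tendsto.const_div_atTop Filter.tendsto_id (q j)).add_const (p i)
  refine (tendsto_finsetSum _ fun i _ => tendsto_finsetSum _ fun j _ => key i j).congr' ?_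
  filter_upwards [Filter.eventually_gt_atTop 0] with t ht
  have hs : ρ.trace.re = ∑ i, ∑ j, Complex.normSq ((Uᴴ * V) i j) * p i := by
    simp_rw [← Finset.sum_mul, normSq_row_sum hρ hσ, one_mul, hρ.trace_re]
  rw [hs, truncRelEnt]
  simp only [Finset.mul_sum, ← Finset.sum_sub_distrib]
  refine Finset.sum_congr rfl fun i _ => Finset.sum_congr rfl fun j _ => ?_
  have : q j + t * p i = t * (q j / t + p i) := by field_simp
  rw [this, Real.log_mul ht.ne' (by have := hp i; have := hq j; positivity)]
  ring

/-- Relative entropy decreases under the map of states dual to a unital *-homomorphism `Φ`. For a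
partial trace, `Φ X = X ⊗ 1`. -/
lemma relEnt_mono {n m : Type*} [Fintype n] [DecidableEq n] [Fintype m] [DecidableEq m]
    {ρ σ U V : Matrix n n ℂ} {p q : n → ℝ} {ρ' σ' U' V' : Matrix m m ℂ} {p' q' : m → ℝ}
    (hρ : Diagonalizes ρ U p) (hσ : Diagonalizes σ V q)
    (hp : ∀ i, 0 < p i) (hq : ∀ i, 0 < q i)
    (hρ' : Diagonalizes ρ' U' p') (hσ' : Diagonalizes σ' V' q')
    (hp' : ∀ i, 0 < p' i) (hq' : ∀ i, 0 < q' i)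
    (Φ : Matrix m m ℂ →⋆ₐ[ℂ] Matrix n n ℂ)
    (hΦρ : ∀ X, (ρ * Φ X).trace = (ρ' * X).trace)
    (hΦσ : ∀ X, (σ * Φ X).trace = (σ' * X).trace) :
    relEnt U' V' p' q' ≤ relEnt U V p q := by
  have hF : ∀ t, 0 ≤ t → resolventSum t U' V' p' q' ≤ resolventSum t U V p q := by
    intro t ht
    obtain ⟨X, hX⟩ := exists_quadForm_eq hρ' hσ' hp' hq' ht
    rw [← hX]
    refine le_trans (le_of_eq ?_) (quadForm_le hρ hσ hp hq ht (Φ X))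
    have hs : (Φ X)ᴴ = Φ Xᴴ := (map_star Φ X).symm
    rw [quadForm, quadForm, hs, ← map_mul, ← map_mul, hΦρ, hΦρ, hΦσ]
  have hG : ∀ t, 0 ≤ t → truncRelEnt U' V' p' q' t ≤ truncRelEnt U V p q t := by
    intro t ht
    have hm : MonotoneOn (fun t => truncRelEnt U V p q t - truncRelEnt U' V' p' q' t)
        (Set.Ici 0) := by
      have hd : ∀ s, 0 ≤ s → HasDerivAt
          (fun t => truncRelEnt U V p q t - truncRelEnt U' V' p' q' t)
          (resolventSum s U V p q - resolventSum s U' V' p' q') s := fun s hs =>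
        (hasDerivAt_truncRelEnt U V hp hq hs).sub (hasDerivAt_truncRelEnt U' V' hp' hq' hs)
      refine monotoneOn_of_deriv_nonneg (convex_Ici 0)
        (fun s hs => (hd s hs).continuousAt.continuousWithinAt)
        (fun s hs => ?_) (fun s hs => ?_)
      · rw [interior_Ici] at hs
        exact (hd s (le_of_lt hs)).differentiableAt.differentiableWithinAt
      · rw [interior_Ici] at hs
        rw [(hd s (le_of_lt hs)).deriv]
        exact sub_nonneg.2 (hF s (le_of_lt hs))
    have h0 := hm (Set.mem_Ici.2 le_rfl) (Set.mem_Ici.2 ht) ht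
    simpa [truncRelEnt] using h0
  have htr : ρ'.trace = ρ.trace := by simpa using (hΦρ 1).symm
  refine le_of_tendsto_of_tendsto (tendsto_truncRelEnt hρ' hσ' hp' hq')
    (tendsto_truncRelEnt hρ hσ hp hq) ?_
  filter_upwards [Filter.eventually_ge_atTop 0] with t ht
  rw [htr]
  exact sub_le_sub_right (hG t ht) _

/-! ### Partial traces and ampliations -/

/-- The embedding `X ↦ 1 ⊗ X` of the operators on `n` into those on `k ⊗ n`, where the index type
`N` of the large system is identified with `k × n` through `e`. -/
noncomputable def ampliation {N k n : Type*} [Fintype N] [DecidableEq N] [Fintype k]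
    [DecidableEq k] [Fintype n] [DecidableEq n] (e : N ≃ k × n) :
    Matrix n n ℂ →⋆ₐ[ℂ] Matrix N N ℂ where
  toFun X := Matrix.of fun i j => if (e i).1 = (e j).1 then X (e i).2 (e j).2 else 0
  map_one' := by
    ext i j
    simp only [Matrix.of_apply, Matrix.one_apply, ← e.injective.eq_iff (a := i), Prod.ext_iff]
    split_ifs <;> simp_all
  map_mul' X Y := by
    ext i j
    simp only [Matrix.of_apply, Matrix.mul_apply]
    rw [← e.symm.sum_comp, Fintype.sum_prod_type]
    simp
  map_zero' := by ext i j; simp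
  map_add' X Y := by ext i j; simp only [Matrix.of_apply, Matrix.add_apply]; split_ifs <;> simp
  commutes' r := by
    ext i j
    simp only [Matrix.of_apply, Matrix.algebraMap_matrix_apply, ← e.injective.eq_iff (a := i),
      Prod.ext_iff]
    split_ifs <;> simp_all
  map_star' X := by
    ext i j
    simp only [Matrix.of_apply, star_eq_conjTranspose, conjTranspose_apply, eq_comm (a := (e i).1)]
    split_ifs <;> simp

lemma ampliation_apply {N k n : Type*} [Fintype N] [DecidableEq N] [Fintype k]
    [DecidableEq k] [Fintype n] [DecidableEq n] (e : N ≃ k × n) (X : Matrix n n ℂ) (i j : N) :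
    ampliation e X i j = if (e i).1 = (e j).1 then X (e i).2 (e j).2 else 0 := rfl

/-- Partial trace over the factor `k`, where `N` is identified with `k × n` through `e`. -/
noncomputable def ptrace {N k n : Type*} [Fintype k] (e : N ≃ k × n) (ρ : Matrix N N ℂ) :
    Matrix n n ℂ :=
  Matrix.of fun x y => ∑ a, ρ (e.symm (a, x)) (e.symm (a, y))

section ptrace

variable {N k n : Type*} [Fintype k] (e : N ≃ k × n)

lemma ptrace_add_smul_one [DecidableEq N] [DecidableEq n] (ρ : Matrix N N ℂ) (ε : ℝ) :
    ptrace e (ρ + (ε : ℂ) • 1) = ptrace e ρ + ((Fintype.card k * ε : ℝ) : ℂ) • 1 := by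
  ext x y
  simp [ptrace, Finset.sum_add_distrib, Matrix.one_apply]

lemma ptrace_posSemidef {ρ : Matrix N N ℂ} (h : ρ.PosSemidef) : (ptrace e ρ).PosSemidef := by
  have : ptrace e ρ = ∑ a, ρ.submatrix (fun x => e.symm (a, x)) (fun x => e.symm (a, x)) := by
    ext x y
    simp [ptrace, Matrix.sum_apply]
  rw [this]
  exact posSemidef_sum _ fun a _ => h.submatrix _

variable [Fintype N] [DecidableEq N] [DecidableEq k] [Fintype n] [DecidableEq n]

/-- The partial trace is dual to the ampliation. -/
lemma trace_mul_ampliation (ρ : Matrix N N ℂ) (X : Matrix n n ℂ) :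
    (ρ * ampliation e X).trace = (ptrace e ρ * X).trace := by
  simp only [trace, diag_apply, Matrix.mul_apply, ampliation_apply, ptrace, Matrix.of_apply]
  rw [← e.symm.sum_comp, Fintype.sum_prod_type, Finset.sum_comm]
  refine Finset.sum_congr rfl fun x _ => ?_
  simp_rw [Finset.sum_mul]
  conv_rhs => rw [Finset.sum_comm]
  refine Finset.sum_congr rfl fun a _ => ?_
  rw [← e.symm.sum_comp, Fintype.sum_prod_type]
  simp

lemma Diagonalizes.ampliation {M U : Matrix n n ℂ} {p : n → ℝ} (h : Diagonalizes M U p) :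
    Diagonalizes (ampliation e M) (ampliation e U) (fun i => p (e i).2) := by
  obtain ⟨h1, h2, h3⟩ := h
  have hs : ∀ X, (_root_.ampliation e X)ᴴ = _root_.ampliation e Xᴴ :=
    fun X => (map_star (_root_.ampliation e) X).symm
  have hd : diagonal (fun i => (p (e i).2 : ℂ)) =
      _root_.ampliation e (diagonal fun i => (p i : ℂ)) := by
    ext i j
    simp only [ampliation_apply, diagonal_apply, ← e.injective.eq_iff (a := i), Prod.ext_iff]
    split_ifs <;> simp_all
  refine ⟨?_, ?_, ?_⟩
  · rw [hs, ← map_mul, h1, map_one]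
  · rw [hs, ← map_mul, h2, map_one]
  · rw [hs, hd, ← map_mul, ← map_mul, ← h3]

/-- `D(ρ ‖ 1 ⊗ Tr_k ρ)` is the negative conditional entropy of `k` given `n`. Here `V diag(q) Vᴴ`
is the reduced state, and `1 ⊗ V` diagonalizes its ampliation. -/
lemma relEnt_ampliation {ρ U : Matrix N N ℂ} {V : Matrix n n ℂ} {p : N → ℝ} {q : n → ℝ}
    (hρ : Diagonalizes ρ U p) (hσ : Diagonalizes (ptrace e ρ) V q) :
    relEnt U (ampliation e V) p (fun i => q (e i).2) = charEnt (ptrace e ρ) - charEnt ρ := by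
  have hσ' := hσ.ampliation e
  have e1 : ∑ i, ∑ j, Complex.normSq ((Uᴴ * ampliation e V) i j) * (p i * Real.log (p i)) =
      - charEnt ρ := by
    simp_rw [← Finset.sum_mul, normSq_row_sum hρ hσ', hρ.charEnt_eq, Real.negMulLog]
    simp
  have e2 : ∑ i, ∑ j, Complex.normSq ((Uᴴ * ampliation e V) i j) *
      (p i * Real.log (q (e j).2)) = - charEnt (ptrace e ρ) := by
    have hL : Diagonalizes (V * diagonal (fun j => (Real.log (q j) : ℂ)) * Vᴴ) V
      (fun j => Real.log (q j)) := ⟨hσ.1, hσ.2.1, rfl⟩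
    have hL' := hL.ampliation e
    have ht := congrArg Complex.re
      (trace_mul_ampliation e ρ (V * diagonal (fun j => (Real.log (q j) : ℂ)) * Vᴴ))
    rw [hρ.trace_mul, hσ.trace_mul] at ht
    have hr : Vᴴ * (V * diagonal (fun j => (Real.log (q j) : ℂ)) * Vᴴ) * V =
        diagonal (fun j => (Real.log (q j) : ℂ)) := by
      calc _ = (Vᴴ * V) * diagonal (fun j => (Real.log (q j) : ℂ)) * (Vᴴ * V) := by
            simp only [Matrix.mul_assoc]
        _ = _ := by rw [hσ.2.1, Matrix.one_mul, Matrix.mul_one]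
    have hl : Uᴴ * ampliation e (V * diagonal (fun j => (Real.log (q j) : ℂ)) * Vᴴ) * U =
        (Uᴴ * ampliation e V) * (diagonal (fun j => (Real.log (q (e j).2) : ℂ)) *
          (Uᴴ * ampliation e V)ᴴ) := by
      rw [hL'.2.2]
      simp only [Matrix.mul_assoc, conjTranspose_mul, conjTranspose_conjTranspose]
    rw [hr, hl] at ht
    rw [hσ.charEnt_eq]
    simp only [Matrix.mul_apply (M := Uᴴ * ampliation e V), diagonal_mul, diagonal_apply_eq,
      conjTranspose_apply, ← starRingEnd_apply, mul_left_comm _ ((Real.log _ : ℝ) : ℂ),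
      Complex.mul_conj, Complex.re_sum, Complex.re_ofReal_mul, Complex.ofReal_re] at ht
    simp only [Real.negMulLog, neg_mul, Finset.sum_neg_distrib, neg_neg, ← ht, Finset.mul_sum]
    refine Finset.sum_congr rfl fun i _ => Finset.sum_congr rfl fun j _ => ?_
    ring
  rw [relEnt]
  simp only [mul_sub, Finset.sum_sub_distrib]
  rw [e1, e2]
  ring

end ptrace

/-! ### Strong subadditivity and weak monotonicity -/

section SSA

variable {A B C : Type*} [Fintype A] [DecidableEq A] [Fintype B] [DecidableEq B]
  [Fintype C] [DecidableEq C]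

/-- The identification of `ABC` with `C(AB)`. -/
def splitC (A B C : Type*) : A × B × C ≃ C × (A × B) where
  toFun x := (x.2.2, x.1, x.2.1)
  invFun x := (x.2.1, x.2.2, x.1)
  left_inv _ := rfl
  right_inv _ := rfl

/-- `Tr_C (1_A ⊗ ρ_BC) = 1_A ⊗ ρ_B`. -/
lemma ptrace_ampliation_comm (ρ : Matrix (A × B × C) (A × B × C) ℂ) :
    ptrace (splitC A B C) (ampliation (Equiv.refl (A × B × C)) (ptrace (Equiv.refl _) ρ)) =
      ampliation (Equiv.refl (A × B)) (ptrace (Equiv.refl _) (ptrace (splitC A B C) ρ)) := by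
  ext ⟨a, b⟩ ⟨a', b'⟩
  simp only [ptrace, ampliation_apply, splitC, Matrix.of_apply, Equiv.refl_symm, Equiv.refl_apply,
    Equiv.coe_fn_symm_mk]
  by_cases haa : a = a'
  · simp only [haa, if_true]
    exact Finset.sum_comm
  · simp [haa]

/-- Strong subadditivity in terms of partial traces: for `ρ + ε` in place of `ρ` all marginals are
invertible and `relEnt_mono` applies; the limit `ε → 0` gives the claim. The systems `A` and `C`
have to be nonempty for the marginals of `ρ + ε` to be invertible. -/
lemma charEnt_ssa [Nonempty A] [Nonempty C] {ρ : Matrix (A × B × C) (A × B × C) ℂ}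
    (h : ρ.PosSemidef) :
    charEnt ρ + charEnt (ptrace (Equiv.refl (A × B)) (ptrace (splitC A B C) ρ)) ≤
      charEnt (ptrace (splitC A B C) ρ) + charEnt (ptrace (Equiv.refl (A × B × C)) ρ) := by
  have hAB := ptrace_posSemidef (splitC A B C) h
  have hBC := ptrace_posSemidef (Equiv.refl (A × B × C)) h
  have hB := ptrace_posSemidef (Equiv.refl (A × B)) hAB
  have hpos : ∀ ε : ℝ, 0 < ε →
      charEnt (ρ + (ε : ℂ) • 1) + charEnt (ptrace (Equiv.refl (A × B)) (ptrace (splitC A B C) ρ) +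
        ((Fintype.card A * (Fintype.card C * ε) : ℝ) : ℂ) • 1) ≤
      charEnt (ptrace (splitC A B C) ρ + ((Fintype.card C * ε : ℝ) : ℂ) • 1) +
        charEnt (ptrace (Equiv.refl (A × B × C)) ρ + ((Fintype.card A * ε : ℝ) : ℂ) • 1) := by
    intro ε hε
    have cA : (0 : ℝ) < Fintype.card A := Nat.cast_pos.2 Fintype.card_pos
    have cC : (0 : ℝ) < Fintype.card C := Nat.cast_pos.2 Fintype.card_pos
    have dρ := (diagonalizes_eigenvalues h.1).add_smul_one ε
    have dAB := (diagonalizes_eigenvalues hAB.1).add_smul_one (Fintype.card C * ε)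
    have dBC := (diagonalizes_eigenvalues hBC.1).add_smul_one (Fintype.card A * ε)
    have dB := (diagonalizes_eigenvalues hB.1).add_smul_one (Fintype.card A * (Fintype.card C * ε))
    rw [← ptrace_add_smul_one] at dAB dBC
    rw [← ptrace_add_smul_one, ← ptrace_add_smul_one] at dB
    have key := relEnt_mono dρ (dBC.ampliation (Equiv.refl (A × B × C)))
      (fun i => add_pos_of_nonneg_of_pos (h.eigenvalues_nonneg i) hε)
      (fun i => add_pos_of_nonneg_of_pos (hBC.eigenvalues_nonneg _) (by positivity))
      dAB (dB.ampliation (Equiv.refl (A × B)))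
      (fun i => add_pos_of_nonneg_of_pos (hAB.eigenvalues_nonneg i) (by positivity))
      (fun i => add_pos_of_nonneg_of_pos (hB.eigenvalues_nonneg _) (by positivity))
      (ampliation (splitC A B C)) (trace_mul_ampliation _ _)
      (fun X => by rw [trace_mul_ampliation, ptrace_ampliation_comm])
    rw [relEnt_ampliation _ dρ dBC, relEnt_ampliation _ dAB dB] at key
    simp only [ptrace_add_smul_one] at key
    linarith
  have c0 := continuous_charEnt_add h.1
  have c1 := (continuous_charEnt_add hAB.1).comp
    (by fun_prop : Continuous fun ε : ℝ => Fintype.card C * ε)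
  have c2 := (continuous_charEnt_add hBC.1).comp
    (by fun_prop : Continuous fun ε : ℝ => Fintype.card A * ε)
  have c3 := (continuous_charEnt_add hB.1).comp
    (by fun_prop : Continuous fun ε : ℝ => Fintype.card A * (Fintype.card C * ε))
  have l1 := ((c0.add c3).tendsto 0).mono_left (nhdsWithin_le_nhds (s := Set.Ioi 0))
  have l2 := ((c1.add c2).tendsto 0).mono_left (nhdsWithin_le_nhds (s := Set.Ioi 0))
  have := le_of_tendsto_of_tendsto l1 l2
    (by filter_upwards [self_mem_nhdsWithin] with ε hε using hpos ε hε)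
  simpa using this

/-- Strong subadditivity with pivot `B`. -/
lemma S3_ssa [Nonempty A] [Nonempty C] {ρ : Matrix (A × B × C) (A × B × C) ℂ}
    (h : ρ.PosSemidef) : S3ABC ρ + S3B ρ ≤ S3AB ρ + S3BC ρ := by
  have hAB := ptrace_posSemidef (splitC A B C) h
  have hBC := ptrace_posSemidef (Equiv.refl (A × B × C)) h
  have hB := ptrace_posSemidef (Equiv.refl (A × B)) hAB
  have e1 : S3AB ρ = charEnt (ptrace (splitC A B C) ρ) / Real.log 2 :=
    vNEntropy_eq_charEnt hAB.1
  have e2 : S3BC ρ = charEnt (ptrace (Equiv.refl (A × B × C)) ρ) / Real.log 2 :=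
    vNEntropy_eq_charEnt hBC.1
  have e3 : S3B ρ = charEnt (ptrace (Equiv.refl (A × B)) (ptrace (splitC A B C) ρ)) / Real.log 2 :=
    vNEntropy_eq_charEnt hB.1
  have e4 : S3ABC ρ = charEnt ρ / Real.log 2 := vNEntropy_eq_charEnt h.1
  rw [e1, e2, e3, e4, ← add_div, ← add_div]
  exact div_le_div_of_nonneg_right (charEnt_ssa h) (Real.log_nonneg (by norm_num))

/-- Strong subadditivity with pivot `C`. -/
lemma S3_ssa_pivotC [Nonempty A] [Nonempty B] {ρ : Matrix (A × B × C) (A × B × C) ℂ}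
    (h : ρ.PosSemidef) : S3ABC ρ + S3C ρ ≤ S3AC ρ + S3BC ρ := by
  let f : A × C × B ≃ A × B × C := (Equiv.refl A).prodCongr (Equiv.prodComm C B)
  have key := S3_ssa (h.submatrix f)
  have e1 : S3ABC (ρ.submatrix f f) = S3ABC ρ := vNEntropy_submatrix f h.1
  have e2 : S3BC (ρ.submatrix f f) = S3BC ρ :=
    vNEntropy_submatrix (Equiv.prodComm C B) (ptrace_posSemidef (Equiv.refl (A × B × C)) h).1
  have e3 : S3B (ρ.submatrix f f) = S3C ρ := rfl
  have e4 : S3AB (ρ.submatrix f f) = S3AC ρ := rfl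
  rwa [e1, e2, e3, e4] at key

/-- Weak monotonicity, `S(A|B) + S(A|C) ≥ 0`. -/
lemma S3_weak_monotonicity [Nonempty A] [Nonempty B] [Nonempty C]
    {ρ : Matrix (A × B × C) (A × B × C) ℂ}
    (h : ρ.PosSemidef) : S3B ρ + S3C ρ ≤ S3AB ρ + S3AC ρ := by
  obtain ⟨M, hM⟩ : ∃ M : Matrix (A × B × C) (A × B × C) ℂ, ρ = M * Mᴴ := by
    have hd := (diagonalizes_eigenvalues h.1).2.2
    refine ⟨(h.1.eigenvectorUnitary : Matrix _ _ ℂ) *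
      diagonal fun i => (Real.sqrt (h.1.eigenvalues i) : ℂ), ?_⟩
    have hsq : diagonal (fun i => (h.1.eigenvalues i : ℂ)) =
        diagonal (fun i => (Real.sqrt (h.1.eigenvalues i) : ℂ)) *
          (diagonal fun i => (Real.sqrt (h.1.eigenvalues i) : ℂ))ᴴ := by
      rw [diagonal_conjTranspose, diagonal_mul_diagonal]
      congr 1
      ext i
      simp only [Pi.star_apply, Complex.star_def, Complex.conj_ofReal, ← Complex.ofReal_mul,
        Real.mul_self_sqrt (h.eigenvalues_nonneg i)]
    conv_lhs => rw [hd, hsq]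
    simp only [Matrix.mul_assoc, conjTranspose_mul]
  have hρ : ∀ x y, ρ x y = ∑ d, M x d * star (M y d) := by
    intro x y; rw [hM]; simp [Matrix.mul_apply]
  -- `M` is the coefficient matrix of a purification of `ρ` by a system `D` indexed by `A × B × C`;
  -- `N` and `K` arrange the same coefficients along the cuts `ABD | C` and `BD | AC`.
  let N : Matrix (A × B × (A × B × C)) C ℂ := Matrix.of fun x c => M (x.1, x.2.1, c) x.2.2
  let K : Matrix (B × (A × B × C)) (A × C) ℂ := Matrix.of fun x y => M (y.1, x.1, y.2) x.2
  have key := S3_ssa (posSemidef_self_mul_conjTranspose N)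
  have e1 : S3ABC (N * Nᴴ) = S3C ρ := by
    refine (vNEntropy_dual N).trans (congrArg vNEntropy ?_)
    ext c c'
    simp [Matrix.mul_apply, N, hρ, Fintype.sum_prod_type, mul_comm]
  have e2 : S3BC (N * Nᴴ) = S3AC ρ := by
    have : S3BC (N * Nᴴ) = vNEntropy (K * Kᴴ) := by
      refine congrArg vNEntropy ?_
      ext x y
      simp [Matrix.mul_apply, N, K, Fintype.sum_prod_type]
    refine this.trans ((vNEntropy_dual K).trans (congrArg vNEntropy ?_))
    ext c c'
    simp [Matrix.mul_apply, K, hρ, redAC, Fintype.sum_prod_type, mul_comm]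
  have e3 : S3B (N * Nᴴ) = S3B ρ := by
    refine congrArg vNEntropy ?_
    ext b b'
    simp only [Matrix.of_apply, Matrix.mul_apply, hρ, N, conjTranspose_apply]
    exact Finset.sum_congr rfl fun a _ => Finset.sum_comm
  have e4 : S3AB (N * Nᴴ) = S3AB ρ := by
    refine congrArg vNEntropy ?_
    ext b b'
    simp only [Matrix.of_apply, Matrix.mul_apply, hρ, N, conjTranspose_apply]
    exact Finset.sum_comm
  rw [e1, e2, e3, e4] at key
  linarith

end SSA

/-- **Remark.** If a tripartite state saturates strong subadditivity at pivot `B`,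
i.e. `I(A;C|B) = 0`, then `S(AC) ≥ S(C)`, i.e. `S(A|C) ≥ 0`. -/
theorem cond_entropy_nonneg_of_saturated_SSA
    {A B C : Type*} [Fintype A] [DecidableEq A] [Fintype B] [DecidableEq B]
    [Fintype C] [DecidableEq C]
    (ρ : Matrix (A × B × C) (A × B × C) ℂ) (hρ : IsState ρ)
    (hsat : S3AB ρ + S3BC ρ - S3ABC ρ - S3B ρ = 0) :
    S3C ρ ≤ S3AC ρ := by
  -- The trace of `ρ` is not zero, so none of the systems is empty.
  have hne : Nonempty (A × B × C) := by
    by_contra hn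
    rw [not_nonempty_iff] at hn
    have := hρ.2
    simp [Matrix.trace] at this
  obtain ⟨a, b, c⟩ := hne
  have : Nonempty A := ⟨a⟩
  have : Nonempty B := ⟨b⟩
  have : Nonempty C := ⟨c⟩
  have h1 := S3_ssa_pivotC hρ.1
  have h2 := S3_weak_monotonicity hρ.1
  linarith
end

section
/- Let ρ^{ABC} be a state of a tripartite quantum system on finite-dimensional Hilbert spaces that saturates strong subadditivity at pivot B, i.e. I(A;C|B) = 0. Then the reduced state ρ^{AC} on H_A ⊗ H_C is separable, i.e. it is a convex combination of product states σ_i^A ⊗ ω_i^C. -/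
/-!
The proof avoids the structure theorem for states with vanishing conditional mutual information and
uses two ingredients.

*Recoverability.* Put `σ = 1 ⊗ ρ_BC`, `ρ = ρ_ABC` on `A ⊗ B ⊗ C` and `σ' = 1 ⊗ ρ_B`, `ρ' = ρ_AB` on
`A ⊗ B`; these are the restrictions of `σ`, `ρ` along `X ↦ X ⊗ 1_C`. Vanishing of `I(A;C|B)` says
that the relative entropies `D(ρ‖σ)` and `D(ρ'‖σ')` agree. Relative entropy is an integral over
`t > 0` of the maxima of the quadratic functionals `2 Re⟨X, ρ⟩ - ⟨X, σX⟩ - t⟨X, Xρ⟩`, and restricting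
`X` to `A ⊗ B` can only decrease these maxima. Equality therefore forces, for every `t`, a common
solution of `σX + tXρ = ρ` and its restricted version (`exists_sylvester`). Linear combinations of
these solutions give one operator `Y` on `A ⊗ B` with `√σ' Y = √ρ'` and `√σ (Y ⊗ 1) = √ρ`
(`exists_sqrt_intertwiner`), which says that the Petz map sends `ρ_AB` to `ρ_ABC`
(`exists_recovery`).

*Separability.* Choose a decomposition `ρ_AB = ∑ w i • τ i` into states that maximises the average of
`‖Tr_B τ i‖²` in Hilbert–Schmidt norm, which exists by compactness. Applying the recovery map to
each `τ i` and measuring `C` refines the decomposition without changing the average marginals on `A`.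
By maximality and strict convexity the measurement reveals nothing about `A`, for every measurement,
so the recovered `τ i` have product marginals on `A ⊗ C`, and these average to `ρ_AC`
(`separable_of_recovery`).
-/

open scoped BigOperators ComplexOrder

open scoped Kronecker

set_option linter.unusedSectionVars false
set_option linter.unusedSimpArgs false

section Proof

open Matrix

/-! ### Spectral coordinates and the quadratic functional -/

/-- The matrix `U diag(f) Uᴴ`. For unitary `U` this is the Hermitian matrix with eigenvectors the
columns of `U` and eigenvalues `f`; functional calculus amounts to changing `f`. -/
noncomputable def specMat {n : Type*} [Fintype n] [DecidableEq n] (U : Matrix n n ℂ) (f : n → ℝ) :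
    Matrix n n ℂ :=
  U * diagonal (fun i => (f i : ℂ)) * Uᴴ

section Spec
variable {n : Type*} [Fintype n] [DecidableEq n] {U V : Matrix n n ℂ}

lemma specMat_mul (hU : Uᴴ * U = 1) (f g : n → ℝ) :
    specMat U f * specMat U g = specMat U (fun i => f i * g i) := by
  have : specMat U f * specMat U g =
      U * diagonal (fun i => (f i : ℂ)) * (Uᴴ * U) * diagonal (fun i => (g i : ℂ)) * Uᴴ := by
    simp only [specMat, Matrix.mul_assoc]
  rw [this, hU, Matrix.mul_one, Matrix.mul_assoc U, diagonal_mul_diagonal, specMat]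
  simp

lemma specMat_conjTranspose (f : n → ℝ) : (specMat U f)ᴴ = specMat U f := by
  simp only [specMat, conjTranspose_mul, conjTranspose_conjTranspose, diagonal_conjTranspose,
    Matrix.mul_assoc]
  congr 3
  ext i
  simp

lemma specMat_posSemidef {f : n → ℝ} (hf : ∀ i, 0 ≤ f i) : (specMat U f).PosSemidef := by
  refine PosSemidef.mul_mul_conjTranspose_same (PosSemidef.diagonal fun i => ?_) U
  simpa using hf i

/-- In the coordinates `X ↦ Uᴴ X V`, left multiplication by `specMat U f` multiplies row `j`
by `f j`. -/
lemma hat_left (hU : Uᴴ * U = 1) (f : n → ℝ) (X : Matrix n n ℂ) (j i : n) :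
    (Uᴴ * (specMat U f * X) * V) j i = f j * (Uᴴ * X * V) j i := by
  have : Uᴴ * (specMat U f * X) * V =
      (Uᴴ * U) * (diagonal (fun i => (f i : ℂ)) * (Uᴴ * X * V)) := by
    simp only [specMat, Matrix.mul_assoc]
  rw [this, hU, Matrix.one_mul, diagonal_mul]

lemma hat_right (hV : Vᴴ * V = 1) (f : n → ℝ) (X : Matrix n n ℂ) (j i : n) :
    (Uᴴ * (X * specMat V f) * V) j i = (Uᴴ * X * V) j i * f i := by
  have : Uᴴ * (X * specMat V f) * V =
      (Uᴴ * X * V) * diagonal (fun i => (f i : ℂ)) * (Vᴴ * V) := by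
    simp only [specMat, Matrix.mul_assoc]
  rw [this, hV, Matrix.mul_one, mul_diagonal]

lemma hat_inj (hU : U * Uᴴ = 1) (hV : V * Vᴴ = 1) {X Y : Matrix n n ℂ}
    (h : ∀ j i, (Uᴴ * X * V) j i = (Uᴴ * Y * V) j i) : X = Y := by
  have h' : Uᴴ * X * V = Uᴴ * Y * V := by ext j i; exact h j i
  have key : ∀ Z : Matrix n n ℂ, U * (Uᴴ * Z * V) * Vᴴ = Z := fun Z => by
    have : U * (Uᴴ * Z * V) * Vᴴ = (U * Uᴴ) * Z * (V * Vᴴ) := by simp only [Matrix.mul_assoc]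
    rw [this, hU, hV, Matrix.one_mul, Matrix.mul_one]
  rw [← key X, h', key Y]

lemma trace_hat (hU : U * Uᴴ = 1) (hV : V * Vᴴ = 1) (X Y : Matrix n n ℂ) :
    (Xᴴ * Y).trace = ∑ j, ∑ i, star ((Uᴴ * X * V) j i) * (Uᴴ * Y * V) j i := by
  have : (Xᴴ * Y).trace = ((Uᴴ * X * V)ᴴ * (Uᴴ * Y * V)).trace := by
    have e : (Uᴴ * X * V)ᴴ * (Uᴴ * Y * V) = Vᴴ * (Xᴴ * (U * Uᴴ) * Y * V) := by
      simp only [conjTranspose_mul, conjTranspose_conjTranspose, Matrix.mul_assoc]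
    rw [e, hU, Matrix.mul_one, trace_mul_comm Vᴴ, Matrix.mul_assoc _ V, hV, Matrix.mul_one]
  rw [this, trace, Finset.sum_comm]
  refine Finset.sum_congr rfl fun i _ => ?_
  rw [diag_apply, Matrix.mul_apply]
  rfl

/-- The concave quadratic functional `2 Re⟨X, ρ⟩ - ⟨X, σX⟩ - t⟨X, Xρ⟩` (Hilbert–Schmidt inner
product). Its maximisers are the solutions of the Sylvester equation `σX + tXρ = ρ`. -/
noncomputable def energy (σ ρ : Matrix n n ℂ) (t : ℝ) (X : Matrix n n ℂ) : ℝ :=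
  2 * (Xᴴ * ρ).trace.re - (Xᴴ * (σ * X)).trace.re - t * (Xᴴ * (X * ρ)).trace.re

/-- The maximum of `energy σ ρ t` for `σ = specMat U q` and `ρ = specMat V p`. Terms with
`q j + t * p i = 0` have `p i = 0`, so the convention `x / 0 = 0` gives them the right value. -/
noncomputable def gval (U V : Matrix n n ℂ) (q p : n → ℝ) (t : ℝ) : ℝ :=
  ∑ j, ∑ i, p i ^ 2 * Complex.normSq ((Uᴴ * V) j i) / (q j + t * p i)

lemma square_completion (x w : ℂ) {p q t : ℝ} (hp : 0 ≤ p) (hq : 0 ≤ q) (ht : 0 < t) :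
    2 * (star x * (w * p)).re - (star x * (q * x)).re - t * (star x * (x * p)).re
      = p ^ 2 * Complex.normSq w / (q + t * p)
        - (q + t * p) * Complex.normSq (x - ((p / (q + t * p) : ℝ) : ℂ) * w) := by
  by_cases h : q + t * p = 0
  · have h1 : t * p = 0 := by nlinarith [mul_nonneg ht.le hp]
    have hp0 : p = 0 := by rcases mul_eq_zero.1 h1 with h | h <;> [linarith; exact h]
    have hq0 : q = 0 := by rw [h1] at h; linarith
    simp [hp0, hq0]
  · obtain ⟨d, hd⟩ : ∃ d, d = q + t * p := ⟨_, rfl⟩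
    rw [← hd] at h ⊢
    obtain rfl : q = d - t * p := by rw [hd]; ring
    simp only [Complex.normSq_apply, Complex.mul_re, Complex.sub_re, Complex.sub_im,
      Complex.ofReal_re, Complex.ofReal_im, Complex.mul_im, Complex.star_def, Complex.conj_re,
      Complex.conj_im]
    field_simp
    ring

/-- Completing the square in every matrix coefficient. -/
lemma energy_eq (hU : Uᴴ * U = 1) (hV : Vᴴ * V = 1) {q p : n → ℝ} (hq : ∀ i, 0 ≤ q i)
    (hp : ∀ i, 0 ≤ p i) {t : ℝ} (ht : 0 < t) (X : Matrix n n ℂ) :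
    energy (specMat U q) (specMat V p) t X = gval U V q p t -
      ∑ j, ∑ i, (q j + t * p i) * Complex.normSq ((Uᴴ * X * V) j i -
        ((p i / (q j + t * p i) : ℝ) : ℂ) * (Uᴴ * V) j i) := by
  have hU' := mul_eq_one_comm.1 hU
  have hV' := mul_eq_one_comm.1 hV
  have h1 : ∀ j i, (Uᴴ * specMat V p * V) j i = (Uᴴ * V) j i * p i := fun j i => by
    have := hat_right (U := U) hV p 1 j i
    simpa using this
  unfold energy gval
  rw [trace_hat hU' hV', trace_hat hU' hV', trace_hat hU' hV']
  simp only [hat_left hU, hat_right hV, h1, Complex.re_sum, Finset.mul_sum,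
    ← Finset.sum_sub_distrib]
  refine Finset.sum_congr rfl fun j _ => Finset.sum_congr rfl fun i _ => ?_
  exact square_completion _ _ (hp i) (hq j) ht

lemma energy_le (hU : Uᴴ * U = 1) (hV : Vᴴ * V = 1) {q p : n → ℝ} (hq : ∀ i, 0 ≤ q i)
    (hp : ∀ i, 0 ≤ p i) {t : ℝ} (ht : 0 < t) (X : Matrix n n ℂ) :
    energy (specMat U q) (specMat V p) t X ≤ gval U V q p t := by
  rw [energy_eq hU hV hq hp ht, sub_le_self_iff]
  exact Finset.sum_nonneg fun j _ => Finset.sum_nonneg fun i _ =>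
    mul_nonneg (add_nonneg (hq j) (mul_nonneg ht.le (hp i))) (Complex.normSq_nonneg _)

lemma eq_of_energy_eq (hU : Uᴴ * U = 1) (hV : Vᴴ * V = 1) {q p : n → ℝ} (hq : ∀ i, 0 ≤ q i)
    (hp : ∀ i, 0 ≤ p i) {t : ℝ} (ht : 0 < t) {X : Matrix n n ℂ}
    (h : energy (specMat U q) (specMat V p) t X = gval U V q p t) :
    specMat U q * X + (t : ℂ) • (X * specMat V p) = specMat V p := by
  have hU' := mul_eq_one_comm.1 hU
  have hV' := mul_eq_one_comm.1 hV
  have hd : ∀ j i, 0 ≤ q j + t * p i := fun j i => add_nonneg (hq j) (mul_nonneg ht.le (hp i))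
  rw [energy_eq hU hV hq hp ht, sub_eq_self] at h
  have h2 : ∀ j i, (q j + t * p i) * Complex.normSq ((Uᴴ * X * V) j i -
        ((p i / (q j + t * p i) : ℝ) : ℂ) * (Uᴴ * V) j i) = 0 := by
    intro j i
    have a := (Finset.sum_eq_zero_iff_of_nonneg (fun j _ => Finset.sum_nonneg fun i _ =>
      mul_nonneg (hd j i) (Complex.normSq_nonneg _))).1 h j (Finset.mem_univ j)
    exact (Finset.sum_eq_zero_iff_of_nonneg (fun i _ =>
      mul_nonneg (hd j i) (Complex.normSq_nonneg _))).1 a i (Finset.mem_univ i)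
  refine hat_inj hU' hV' fun j i => ?_
  have e1 : (Uᴴ * specMat V p * V) j i = (Uᴴ * V) j i * p i := by
    have := hat_right (U := U) hV p 1 j i
    simpa using this
  rw [Matrix.mul_add, Matrix.add_mul, Matrix.add_apply, hat_left hU, e1, Matrix.mul_smul,
    Matrix.smul_mul, Matrix.smul_apply, hat_right hV, smul_eq_mul]
  rcases mul_eq_zero.1 (h2 j i) with h0 | h0
  · have hp0 : p i = 0 := by
      have := hq j
      have := hp i
      have h3 : t * p i = 0 := by nlinarith [mul_nonneg ht.le (hp i)]
      rcases mul_eq_zero.1 h3 with h | h <;> [linarith; exact h]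
    have hq0 : q j = 0 := by rw [hp0] at h0; linarith
    simp [hp0, hq0]
  · rw [Complex.normSq_eq_zero, sub_eq_zero] at h0
    by_cases h3 : q j + t * p i = 0
    · have h4 : t * p i = 0 := by nlinarith [mul_nonneg ht.le (hp i), hq j]
      have hp0 : p i = 0 := by rcases mul_eq_zero.1 h4 with h | h <;> [linarith; exact h]
      have hq0 : q j = 0 := by rw [hp0] at h3; linarith
      simp [hp0, hq0]
    · have h3' : ((q j + t * p i : ℝ) : ℂ) ≠ 0 := by exact_mod_cast h3
      have h4 : ((q j : ℂ)) = ((q j + t * p i : ℝ) : ℂ) - t * p i := by push_cast; ring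
      rw [h0, Complex.ofReal_div]
      nth_rewrite 1 [h4]
      generalize ((q j + t * p i : ℝ) : ℂ) = d at h3'
      field_simp
      ring

lemma exists_energy_eq (hU : Uᴴ * U = 1) (hV : Vᴴ * V = 1) {q p : n → ℝ} (hq : ∀ i, 0 ≤ q i)
    (hp : ∀ i, 0 ≤ p i) {t : ℝ} (ht : 0 < t) :
    ∃ X, energy (specMat U q) (specMat V p) t X = gval U V q p t := by
  refine ⟨U * (Matrix.of fun j i => ((p i / (q j + t * p i) : ℝ) : ℂ) * (Uᴴ * V) j i) * Vᴴ, ?_⟩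
  set Z : Matrix n n ℂ := Matrix.of fun j i => ((p i / (q j + t * p i) : ℝ) : ℂ) * (Uᴴ * V) j i
    with hZ
  have e : Uᴴ * (U * Z * Vᴴ) * V = Z := by
    have : Uᴴ * (U * Z * Vᴴ) * V = (Uᴴ * U) * Z * (Vᴴ * V) := by simp only [Matrix.mul_assoc]
    rw [this, hU, hV, Matrix.one_mul, Matrix.mul_one]
  rw [energy_eq hU hV hq hp ht, e]
  simp [hZ]

/-- An antiderivative of `gval` in `t`. It interpolates between `Tr ρ log σ` at `t = 0` and, up to
the term `(Tr ρ) log t`, `Tr ρ log ρ` at `t = ∞`. -/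
noncomputable def hval (U V : Matrix n n ℂ) (q p : n → ℝ) (t : ℝ) : ℝ :=
  ∑ j, ∑ i, p i * Complex.normSq ((Uᴴ * V) j i) * Real.log (q j + t * p i)

lemma hasDerivAt_hval {q p : n → ℝ} (hq : ∀ i, 0 ≤ q i)
    (hp : ∀ i, 0 ≤ p i) {t : ℝ} (ht : 0 < t) :
    HasDerivAt (hval U V q p) (gval U V q p t) t := by
  unfold gval
  have : hval U V q p = fun t => ∑ j, ∑ i,
      p i * Complex.normSq ((Uᴴ * V) j i) * Real.log (q j + t * p i) := rfl
  rw [this]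
  refine HasDerivAt.fun_sum fun j _ => HasDerivAt.fun_sum fun i _ => ?_
  rcases (hp i).eq_or_lt with h | h
  · simp [← h, hasDerivAt_const]
  · have hne : q j + t * p i ≠ 0 := by
      have := hq j
      positivity
    have hl : HasDerivAt (fun t : ℝ => q j + t * p i) (p i) t := by
      simpa using ((hasDerivAt_id t).mul_const (p i)).const_add (q j)
    have := (hl.log hne).const_mul (p i * Complex.normSq ((Uᴴ * V) j i))
    refine this.congr_deriv ?_
    rw [sq, mul_div_assoc']
    congr 1
    ring

/-- The hypothesis says that the support of `ρ` lies in that of `σ`; without it the limit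
would be `-∞`. -/
lemma tendsto_hval_zero {q p : n → ℝ}
    (hs : ∀ j i, q j = 0 → p i * Complex.normSq ((Uᴴ * V) j i) = 0) :
    Filter.Tendsto (hval U V q p) (nhdsWithin 0 (Set.Ioi 0))
      (nhds (∑ j, ∑ i, p i * Complex.normSq ((Uᴴ * V) j i) * Real.log (q j))) := by
  refine tendsto_finsetSum _ fun j _ => tendsto_finsetSum _ fun i _ => ?_
  by_cases h : q j = 0
  · simp [hs j i h]
  · refine Filter.Tendsto.const_mul _ ?_
    refine tendsto_nhdsWithin_of_tendsto_nhds ?_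
    have : ContinuousAt (fun t : ℝ => Real.log (q j + t * p i)) 0 := by
      refine ContinuousAt.log (by fun_prop) (by simpa using h)
    simpa [ContinuousAt] using this

lemma sum_normSq_col (hU : U * Uᴴ = 1) (hV : Vᴴ * V = 1) (i : n) :
    ∑ j, Complex.normSq ((Uᴴ * V) j i) = 1 := by
  have h : ((Uᴴ * V)ᴴ * (Uᴴ * V)) i i = 1 := by
    have : (Uᴴ * V)ᴴ * (Uᴴ * V) = Vᴴ * (U * Uᴴ) * V := by
      simp only [conjTranspose_mul, conjTranspose_conjTranspose, Matrix.mul_assoc]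
    rw [this, hU, Matrix.mul_one, hV, Matrix.one_apply_eq]
  rw [Matrix.mul_apply] at h
  have h2 : ∑ j, ((Complex.normSq ((Uᴴ * V) j i) : ℝ) : ℂ) = 1 := by
    rw [← h]
    refine Finset.sum_congr rfl fun j _ => ?_
    rw [conjTranspose_apply, Complex.star_def, Complex.normSq_eq_conj_mul_self]
  exact_mod_cast h2

lemma tendsto_hval_top (hU : U * Uᴴ = 1) (hV : Vᴴ * V = 1) {q p : n → ℝ} (hq : ∀ i, 0 ≤ q i)
    (hp : ∀ i, 0 ≤ p i) :
    Filter.Tendsto (fun t => hval U V q p t - (∑ i, p i) * Real.log t) Filter.atTop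
      (nhds (∑ i, p i * Real.log (p i))) := by
  have e : ∀ f : n → ℝ, ∑ i, p i * f i =
      ∑ j, ∑ i, p i * Complex.normSq ((Uᴴ * V) j i) * f i := by
    intro f
    rw [Finset.sum_comm]
    refine Finset.sum_congr rfl fun i _ => ?_
    rw [← Finset.sum_mul, ← Finset.mul_sum, sum_normSq_col hU hV, mul_one]
  have e2 : ∀ t, hval U V q p t - (∑ i, p i) * Real.log t = ∑ j, ∑ i,
      p i * Complex.normSq ((Uᴴ * V) j i) * (Real.log (q j + t * p i) - Real.log t) := by
    intro t
    rw [Finset.sum_mul, e fun _ => Real.log t, hval]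
    simp only [mul_sub, Finset.sum_sub_distrib]
  simp only [e2]
  rw [e]
  refine tendsto_finsetSum _ fun j _ => tendsto_finsetSum _ fun i _ => ?_
  rcases (hp i).eq_or_lt with h | h
  · simp [← h]
  · refine Filter.Tendsto.const_mul _ ?_
    have h1 : Filter.Tendsto (fun t : ℝ => Real.log (q j / t + p i)) Filter.atTop
        (nhds (Real.log (p i))) := by
      refine Filter.Tendsto.log ?_ h.ne'
      simpa using (tendsto_const_nhds.div_atTop Filter.tendsto_id).add_const (p i)
    refine h1.congr' ?_
    filter_upwards [Filter.eventually_gt_atTop 0] with t ht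
    have := hq j
    rw [← Real.log_div (by positivity) ht.ne']
    congr 1
    field_simp

end Spec

/-! ### Equality of relative entropies -/

/-- The functions `r ↦ 1 / (r + t)`, `t > 0`, interpolate arbitrary values on a finite set of
positive reals: a functional vanishing on all of them yields, after clearing denominators, a
polynomial with infinitely many roots. -/
lemma exists_resolvent_interpolation (F : Finset ℝ) (hF : ∀ r ∈ F, 0 < r) (f : ℝ → ℝ) :
    ∃ c : Set.Ioi (0 : ℝ) →₀ ℝ, ∀ r ∈ F, (c.sum fun t a => a * (1 / (r + t))) = f r := by
  let v : Set.Ioi (0 : ℝ) → (F → ℝ) := fun t r => 1 / (r + t)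
  have htop : Submodule.span ℝ (Set.range v) = ⊤ := by
    by_contra hne
    obtain ⟨φ, hφ, hker⟩ := Submodule.exists_le_ker_of_lt_top _ (lt_top_iff_ne_top.2 hne)
    apply hφ
    have hφv : ∀ w : F → ℝ, φ w = ∑ r, w r * φ (Pi.single r 1) := by
      intro w
      conv_lhs => rw [← Finset.univ_sum_single w]
      rw [map_sum]
      refine Finset.sum_congr rfl fun r _ => ?_
      have : (Pi.single r (w r) : F → ℝ) = w r • Pi.single r 1 := by
        rw [← Pi.single_smul]; simp
      rw [this, map_smul, smul_eq_mul]
    let Q : Polynomial ℝ := ∑ r : F, Polynomial.C (φ (Pi.single r 1)) *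
      ∏ s ∈ Finset.univ.erase r, (Polynomial.X + Polynomial.C (s : ℝ))
    have hQ : Q = 0 := by
      refine Polynomial.eq_zero_of_infinite_isRoot Q ((Set.Ioi_infinite (0 : ℝ)).mono ?_)
      intro t ht
      have h0 : φ (v ⟨t, ht⟩) = 0 := hker (Submodule.subset_span ⟨_, rfl⟩)
      rw [hφv] at h0
      have hpos : ∀ s : F, t + (s : ℝ) ≠ 0 := fun s => by
        have := hF s s.2
        have : 0 < t := ht
        positivity
      have : Polynomial.eval t Q = (∑ r, v ⟨t, ht⟩ r * φ (Pi.single r 1)) *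
          ∏ s : F, (t + (s : ℝ)) := by
        simp only [Q, Polynomial.eval_finsetSum, Polynomial.eval_mul, Polynomial.eval_C,
          Polynomial.eval_prod, Polynomial.eval_add, Polynomial.eval_X, Finset.sum_mul]
        refine Finset.sum_congr rfl fun r _ => ?_
        rw [← Finset.mul_prod_erase Finset.univ _ (Finset.mem_univ r)]
        simp only [v]
        have h1 := hpos r
        rw [add_comm] at h1
        rw [add_comm t]
        field_simp
      change Polynomial.eval t Q = 0
      rw [this, h0, zero_mul]
    ext r
    have h1 : Polynomial.eval (-(r : ℝ)) Q = 0 := by rw [hQ]; simp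
    simp only [Q, Polynomial.eval_finsetSum, Polynomial.eval_mul, Polynomial.eval_C,
          Polynomial.eval_prod, Polynomial.eval_add, Polynomial.eval_X] at h1
    rw [Finset.sum_eq_single r] at h1
    · rcases mul_eq_zero.1 h1 with h | h
      · simpa using h
      · obtain ⟨s, hs, h2⟩ := Finset.prod_eq_zero_iff.1 h
        exact absurd (Subtype.ext (by linarith : (s : ℝ) = r)) (Finset.ne_of_mem_erase hs)
    · intro s _ hs
      rw [Finset.prod_eq_zero (Finset.mem_erase.2 ⟨hs.symm, Finset.mem_univ r⟩) (by simp), mul_zero]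
    · simp
  have hmem : (fun r : F => f r) ∈ Submodule.span ℝ (Set.range v) := by rw [htop]; trivial
  obtain ⟨c, hc⟩ := Finsupp.mem_span_range_iff_exists_finsupp.1 hmem
  refine ⟨c, fun r hr => ?_⟩
  have := congrFun hc ⟨r, hr⟩
  rw [← this, Finsupp.sum, Finsupp.sum, Finset.sum_apply]
  rfl

section Core
variable {n m : Type*} [Fintype n] [DecidableEq n] [Fintype m] [DecidableEq m]
  {U V : Matrix n n ℂ} {U' V' : Matrix m m ℂ}

/-- `energy` only involves traces against `σ` and `ρ`, so it is preserved by a star homomorphism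
`ι` under which `σ`, `ρ` restrict to `σ'`, `ρ'`. -/
lemma energy_map (ι : Matrix m m ℂ →⋆ₐ[ℂ] Matrix n n ℂ) {σ ρ : Matrix n n ℂ} {σ' ρ' : Matrix m m ℂ}
    (hσ : ∀ X, (ι X * σ).trace = (X * σ').trace) (hρ : ∀ X, (ι X * ρ).trace = (X * ρ').trace)
    (t : ℝ) (X : Matrix m m ℂ) : energy σ ρ t (ι X) = energy σ' ρ' t X := by
  have h1 : (ι X)ᴴ = ι Xᴴ := by rw [← star_eq_conjTranspose, ← map_star, star_eq_conjTranspose]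
  unfold energy
  rw [h1, hρ, trace_mul_comm (ι Xᴴ) (σ * _), Matrix.mul_assoc σ, ← map_mul, trace_mul_comm σ, hσ,
    ← Matrix.mul_assoc (ι Xᴴ), ← map_mul, hρ, trace_mul_comm Xᴴ (σ' * X), Matrix.mul_assoc σ',
    trace_mul_comm σ', Matrix.mul_assoc Xᴴ]

/-- If the relative entropies of the pairs `(ρ, σ)` and `(ρ', σ')` agree, one `X` solves the
Sylvester equations of both. By `energy_map` the maximum over the smaller algebra is at most that
over the larger one, so the difference of the two antiderivatives `hval` is monotone in `t`;
equality of its limits at `0` and `∞` makes it constant, hence the two maxima agree. -/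
lemma exists_sylvester (ι : Matrix m m ℂ →⋆ₐ[ℂ] Matrix n n ℂ)
    (hU : Uᴴ * U = 1) (hV : Vᴴ * V = 1) (hU' : U'ᴴ * U' = 1) (hV' : V'ᴴ * V' = 1)
    {q p : n → ℝ} {q' p' : m → ℝ} (hq : ∀ i, 0 ≤ q i) (hp : ∀ i, 0 ≤ p i)
    (hq' : ∀ i, 0 ≤ q' i) (hp' : ∀ i, 0 ≤ p' i)
    (hs : ∀ j i, q j = 0 → p i * Complex.normSq ((Uᴴ * V) j i) = 0)
    (hs' : ∀ j i, q' j = 0 → p' i * Complex.normSq ((U'ᴴ * V') j i) = 0)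
    (hσ : ∀ X, (ι X * specMat U q).trace = (X * specMat U' q').trace)
    (hρ : ∀ X, (ι X * specMat V p).trace = (X * specMat V' p').trace)
    (hsum : ∑ i, p i = ∑ i, p' i)
    (hent : ∑ i, p i * Real.log (p i) -
        ∑ j, ∑ i, p i * Complex.normSq ((Uᴴ * V) j i) * Real.log (q j) =
      ∑ i, p' i * Real.log (p' i) -
        ∑ j, ∑ i, p' i * Complex.normSq ((U'ᴴ * V') j i) * Real.log (q' j))
    {t : ℝ} (ht : 0 < t) :
    ∃ X, specMat U' q' * X + (t : ℂ) • (X * specMat V' p') = specMat V' p' ∧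
      specMat U q * ι X + (t : ℂ) • (ι X * specMat V p) = specMat V p := by
  have hle : ∀ s, 0 < s → gval U' V' q' p' s ≤ gval U V q p s := by
    intro s hs0
    obtain ⟨X, hX⟩ := exists_energy_eq hU' hV' hq' hp' hs0
    rw [← hX, ← energy_map ι hσ hρ]
    exact energy_le hU hV hq hp hs0 _
  let D : ℝ → ℝ := fun s => hval U V q p s - hval U' V' q' p' s
  have hD : ∀ s, 0 < s → HasDerivAt D (gval U V q p s - gval U' V' q' p' s) s := fun s h =>
    (hasDerivAt_hval hq hp h).sub (hasDerivAt_hval hq' hp' h)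
  have hmono : MonotoneOn D (Set.Ioi 0) := by
    refine monotoneOn_of_deriv_nonneg (convex_Ioi 0)
      (fun s h => (hD s h).continuousAt.continuousWithinAt) ?_ ?_
    · intro s h
      rw [interior_Ioi] at h
      exact (hD s h).differentiableAt.differentiableWithinAt
    · intro s h
      rw [interior_Ioi] at h
      rw [(hD s h).deriv]
      linarith [hle s h]
  have h0 := (tendsto_hval_zero hs).sub (tendsto_hval_zero hs')
  have h1 : Filter.Tendsto D Filter.atTop (nhds _) :=
    ((tendsto_hval_top (mul_eq_one_comm.1 hU) hV hq hp).sub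
      (tendsto_hval_top (mul_eq_one_comm.1 hU') hV' hq' hp')).congr fun s => by
        simp only [D, hsum]; ring
  set a := ∑ j, ∑ i, p i * Complex.normSq ((Uᴴ * V) j i) * Real.log (q j) -
      ∑ j, ∑ i, p' i * Complex.normSq ((U'ᴴ * V') j i) * Real.log (q' j) with ha
  have h1' : Filter.Tendsto D Filter.atTop (nhds a) := by
    convert h1 using 2
    rw [ha]; linarith
  have hconst : ∀ s, 0 < s → D s = a := by
    intro s hs0
    apply le_antisymm
    · refine ge_of_tendsto h1' ?_
      filter_upwards [Filter.eventually_ge_atTop s] with r hr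
      exact hmono hs0 (lt_of_lt_of_le hs0 hr) hr
    · refine le_of_tendsto h0 ?_
      have : Set.Ioo 0 s ∈ nhdsWithin (0 : ℝ) (Set.Ioi 0) := Ioo_mem_nhdsGT hs0
      filter_upwards [this] with r hr
      exact hmono hr.1 hs0 hr.2.le
  have hg : gval U V q p t = gval U' V' q' p' t := by
    have hc : HasDerivAt D 0 t := (hasDerivAt_const t a).congr_of_eventuallyEq (by
      filter_upwards [Ioi_mem_nhds ht] with s h using hconst s h)
    linarith [(hD t ht).unique hc]
  obtain ⟨X, hX⟩ := exists_energy_eq hU' hV' hq' hp' ht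
  refine ⟨X, eq_of_energy_eq hU' hV' hq' hp' ht hX, eq_of_energy_eq hU hV hq hp ht ?_⟩
  rw [energy_map ι hσ hρ, hX, hg]

/-- A combination of the Sylvester solutions `X t` whose coefficients interpolate `r ↦ r^(-1/2)`
at the ratios `r = q j / p i` solves `√σ Y = √ρ`. -/
lemma sqrt_of_sylvester (hU : Uᴴ * U = 1) (hV : Vᴴ * V = 1)
    {q p : n → ℝ} (hq : ∀ i, 0 ≤ q i) (hp : ∀ i, 0 ≤ p i)
    (hs : ∀ j i, q j = 0 → p i * Complex.normSq ((Uᴴ * V) j i) = 0)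
    (X : Set.Ioi (0 : ℝ) → Matrix n n ℂ)
    (hX : ∀ t, specMat U q * X t + ((t : ℝ) : ℂ) • (X t * specMat V p) = specMat V p)
    (c : Set.Ioi (0 : ℝ) →₀ ℝ)
    (hc : ∀ j i, 0 < q j → 0 < p i →
      (c.sum fun t a => a * (1 / (q j / p i + t))) = Real.sqrt (p i / q j)) :
    specMat U (fun j => Real.sqrt (q j)) * (c.sum fun t a => (a : ℂ) • X t) =
      specMat V (fun i => Real.sqrt (p i)) := by
  refine hat_inj (mul_eq_one_comm.1 hU) (mul_eq_one_comm.1 hV) fun j i => ?_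
  have e0 : ∀ f : n → ℝ, (Uᴴ * specMat V f * V) j i = (Uᴴ * V) j i * f i := fun f => by
    have := hat_right (U := U) hV f 1 j i
    simpa using this
  have e1 : ∀ t : Set.Ioi (0 : ℝ),
      ((q j : ℂ) + (t : ℝ) * p i) * (Uᴴ * X t * V) j i = (Uᴴ * V) j i * p i := by
    intro t
    have := congrArg (fun Z => (Uᴴ * Z * V) j i) (hX t)
    simp only [Matrix.mul_add, Matrix.add_mul, Matrix.add_apply, hat_left hU, e0, Matrix.mul_smul,
      Matrix.smul_mul, Matrix.smul_apply, hat_right hV, smul_eq_mul] at this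
    rw [← this]; ring
  have e2 : (Uᴴ * (c.sum fun t a => (a : ℂ) • X t) * V) j i =
      c.sum fun t a => (a : ℂ) * (Uᴴ * X t * V) j i := by
    simp only [Finsupp.sum, Matrix.mul_sum, Matrix.sum_mul, Matrix.sum_apply, Matrix.mul_smul,
      Matrix.smul_mul, Matrix.smul_apply, smul_eq_mul]
  rw [hat_left hU, e0, e2]
  rcases (hq j).eq_or_lt with h | h
  · have := hs j i h.symm
    rcases mul_eq_zero.1 this with h2 | h2
    · simp [← h, h2]
    · rw [Complex.normSq_eq_zero] at h2
      simp [← h, h2]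
  rcases (hp i).eq_or_lt with h2 | h2
  · have h3 : ∀ t, (Uᴴ * X t * V) j i = 0 := fun t => by
      have h4 := e1 t
      rw [← h2] at h4
      simpa [h.ne'] using h4
    simp [h3, ← h2]
  · have h3 : ∀ t : Set.Ioi (0 : ℝ), (Uᴴ * X t * V) j i =
        ((1 / (q j / p i + t) : ℝ) : ℂ) * (Uᴴ * V) j i := fun t => by
      have ht : (0 : ℝ) < t := t.2
      have hpos : (0 : ℝ) < q j + t * p i := by positivity
      have h4 : ((q j : ℂ) + (t : ℝ) * p i) ≠ 0 := by exact_mod_cast hpos.ne'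
      have h5 : (p i : ℂ) ≠ 0 := by exact_mod_cast h2.ne'
      refine mul_left_cancel₀ h4 ?_
      rw [e1 t]
      have h6 : (1 / (q j / p i + t) : ℝ) = p i / (q j + t * p i) := by
        have : (q j / p i + t) = (q j + t * p i) / p i := by field_simp
        rw [this, one_div_div]
      rw [h6]
      push_cast
      rw [← mul_assoc, mul_div_cancel₀ _ h4, mul_comm]
    have h7 : (c.sum fun t a => (a : ℂ) * (Uᴴ * X t * V) j i) =
        ((c.sum fun t a => a * (1 / (q j / p i + t)) : ℝ) : ℂ) * (Uᴴ * V) j i := by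
      simp only [h3, Finsupp.sum, Complex.ofReal_sum, Finset.sum_mul]
      refine Finset.sum_congr rfl fun t _ => ?_
      push_cast
      ring
    rw [h7, hc j i h h2, ← mul_assoc, ← Complex.ofReal_mul, ← Real.sqrt_mul h.le,
      mul_div_cancel₀ _ h.ne', mul_comm]

/-- Equality of relative entropies under restriction along `ι` produces a single `Y` with
`√σ' Y = √ρ'` and `√σ ι(Y) = √ρ`. -/
lemma exists_sqrt_intertwiner (ι : Matrix m m ℂ →⋆ₐ[ℂ] Matrix n n ℂ)
    (hU : Uᴴ * U = 1) (hV : Vᴴ * V = 1) (hU' : U'ᴴ * U' = 1) (hV' : V'ᴴ * V' = 1)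
    {q p : n → ℝ} {q' p' : m → ℝ} (hq : ∀ i, 0 ≤ q i) (hp : ∀ i, 0 ≤ p i)
    (hq' : ∀ i, 0 ≤ q' i) (hp' : ∀ i, 0 ≤ p' i)
    (hs : ∀ j i, q j = 0 → p i * Complex.normSq ((Uᴴ * V) j i) = 0)
    (hs' : ∀ j i, q' j = 0 → p' i * Complex.normSq ((U'ᴴ * V') j i) = 0)
    (hσ : ∀ X, (ι X * specMat U q).trace = (X * specMat U' q').trace)
    (hρ : ∀ X, (ι X * specMat V p).trace = (X * specMat V' p').trace)
    (hsum : ∑ i, p i = ∑ i, p' i)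
    (hent : ∑ i, p i * Real.log (p i) -
        ∑ j, ∑ i, p i * Complex.normSq ((Uᴴ * V) j i) * Real.log (q j) =
      ∑ i, p' i * Real.log (p' i) -
        ∑ j, ∑ i, p' i * Complex.normSq ((U'ᴴ * V') j i) * Real.log (q' j)) :
    ∃ Y, specMat U' (fun j => Real.sqrt (q' j)) * Y = specMat V' (fun i => Real.sqrt (p' i)) ∧
      specMat U (fun j => Real.sqrt (q j)) * ι Y = specMat V (fun i => Real.sqrt (p i)) := by
  choose X hX' hX using fun t : Set.Ioi (0 : ℝ) =>
    exists_sylvester ι hU hV hU' hV' hq hp hq' hp' hs hs' hσ hρ hsum hent t.2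
  -- All ratios of eigenvalues of either pair, so that one interpolation serves both.
  let F : Finset ℝ := ((Finset.univ.image fun x : n × n => q x.1 / p x.2) ∪
    (Finset.univ.image fun x : m × m => q' x.1 / p' x.2)).filter (0 < ·)
  obtain ⟨c, hc⟩ := exists_resolvent_interpolation F (fun r hr => (Finset.mem_filter.1 hr).2)
    (fun r => Real.sqrt r⁻¹)
  refine ⟨c.sum fun t a => (a : ℂ) • X t, ?_, ?_⟩
  · refine sqrt_of_sylvester hU' hV' hq' hp' hs' X hX' c fun j i hj hi => ?_
    rw [hc, inv_div]
    refine Finset.mem_filter.2 ⟨Finset.mem_union_right _ ?_, by positivity⟩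
    exact Finset.mem_image.2 ⟨(j, i), Finset.mem_univ _, rfl⟩
  · have : ι (c.sum fun t a => (a : ℂ) • X t) = c.sum fun t a => (a : ℂ) • ι (X t) := by
      simp only [Finsupp.sum, map_sum, map_smul]
    rw [this]
    refine sqrt_of_sylvester hU hV hq hp hs (fun t => ι (X t)) hX c fun j i hj hi => ?_
    rw [hc, inv_div]
    refine Finset.mem_filter.2 ⟨Finset.mem_union_left _ ?_, by positivity⟩
    exact Finset.mem_image.2 ⟨(j, i), Finset.mem_univ _, rfl⟩

end Core

/-! ### Spectral decomposition, convexity and compactness -/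

lemma eigenvectorMat_unitary {n : Type*} [Fintype n] [DecidableEq n] {M : Matrix n n ℂ}
    (h : M.IsHermitian) :
    (h.eigenvectorUnitary : Matrix n n ℂ)ᴴ * (h.eigenvectorUnitary : Matrix n n ℂ) = 1 := by
  rw [← star_eq_conjTranspose]
  exact Unitary.coe_star_mul_self _

lemma eq_specMat {n : Type*} [Fintype n] [DecidableEq n] {M : Matrix n n ℂ}
    (h : M.IsHermitian) : M = specMat (h.eigenvectorUnitary : Matrix n n ℂ) h.eigenvalues := by
  conv_lhs => rw [h.spectral_theorem]
  rw [Unitary.conjStarAlgAut_apply, star_eq_conjTranspose]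
  rfl

lemma exists_conjTranspose_mul_self {n : Type*} [Fintype n] [DecidableEq n] {M : Matrix n n ℂ}
    (h : M.PosSemidef) : ∃ F : Matrix n n ℂ, M = Fᴴ * F := by
  refine ⟨specMat (h.1.eigenvectorUnitary : Matrix n n ℂ) fun i => Real.sqrt (h.1.eigenvalues i), ?_⟩
  rw [specMat_conjTranspose, specMat_mul (eigenvectorMat_unitary h.1)]
  simp only [Real.mul_self_sqrt (h.eigenvalues_nonneg _)]
  exact eq_specMat h.1

lemma exists_scale_le_one {n : Type*} [Fintype n] [DecidableEq n] {M : Matrix n n ℂ}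
    (h : M.PosSemidef) : ∃ s : ℝ, 0 < s ∧ (1 - (s : ℂ) • M).PosSemidef := by
  set e := h.1.eigenvalues with he
  have he0 : ∀ i, 0 ≤ e i := h.eigenvalues_nonneg
  have hS : 0 ≤ ∑ i, e i := Finset.sum_nonneg fun i _ => he0 i
  refine ⟨1 / (1 + ∑ i, e i), by positivity, ?_⟩
  have hU := eigenvectorMat_unitary h.1
  have : (1 - ((1 / (1 + ∑ i, e i) : ℝ) : ℂ) • M) =
      specMat (h.1.eigenvectorUnitary : Matrix n n ℂ) fun i => 1 - 1 / (1 + ∑ i, e i) * e i := by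
    conv_lhs => rw [eq_specMat h.1]
    have hd : (diagonal fun i => ((1 - 1 / (1 + ∑ i, e i) * e i : ℝ) : ℂ)) =
        1 - ((1 / (1 + ∑ i, e i) : ℝ) : ℂ) • diagonal fun i => (e i : ℂ) := by
      ext i j
      by_cases hij : i = j
      · subst hij; simp
      · simp [hij]
    rw [specMat, specMat, hd, Matrix.mul_sub, Matrix.sub_mul, Matrix.mul_one,
      mul_eq_one_comm.1 hU, Matrix.mul_smul, Matrix.smul_mul]
  rw [this]
  refine specMat_posSemidef fun i => ?_
  have h1 : e i ≤ ∑ i, e i := Finset.single_le_sum (fun i _ => he0 i) (Finset.mem_univ i)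
  rw [sub_nonneg, one_div_mul_eq_div, div_le_one (by positivity)]
  linarith

lemma sum_embedding {ι κ M : Type*} [Fintype ι] [Fintype κ] [AddCommMonoid M] (g : ι ↪ κ)
    (k : κ → M) (hk : ∀ b, (¬ ∃ a, g a = b) → k b = 0) : ∑ b, k b = ∑ i, k (g i) := by
  symm
  apply Finset.sum_of_injOn g g.injective.injOn (by simp)
  · intro b _ hb
    exact hk b (by simpa using hb)
  · simp

/-- By Carathéodory, the convex hull is a continuous image of `Δ × s^N` with `N = dim E + 1`. -/
theorem isCompact_convexHull_of_isCompact {E : Type*} [AddCommGroup E] [Module ℝ E]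
    [TopologicalSpace E] [ContinuousAdd E] [ContinuousSMul ℝ E] [FiniteDimensional ℝ E]
    {s : Set E} (hs : IsCompact s) : IsCompact (convexHull ℝ s) := by
  rcases s.eq_empty_or_nonempty with rfl | ⟨x₀, hx₀⟩
  · simp
  let N := Module.finrank ℝ E + 1
  let f : (Fin N → ℝ) × (Fin N → E) → E := fun x => ∑ i, x.1 i • x.2 i
  have hf : Continuous f := by fun_prop
  have : convexHull ℝ s = f '' (stdSimplex ℝ (Fin N) ×ˢ Set.pi Set.univ fun _ => s) := by
    apply Set.Subset.antisymm
    · intro x hx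
      obtain ⟨ι, _, z, w, hz, hind, hw, hw1, hx⟩ := eq_pos_convex_span_of_mem_convexHull hx
      have hcard : Fintype.card ι ≤ Fintype.card (Fin N) := by
        rw [Fintype.card_fin]
        exact hind.card_le_finrank_succ.trans (Nat.succ_le_succ (Submodule.finrank_le _))
      obtain ⟨g⟩ := Function.Embedding.nonempty_of_card_le hcard
      have hinj := g.injective
      refine ⟨(Function.extend g w 0, Function.extend g z fun _ => x₀), ⟨⟨?_, ?_⟩, ?_⟩, ?_⟩
      · intro b
        by_cases hb : ∃ a, g a = b
        · obtain ⟨a, rfl⟩ := hb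
          simpa [hinj.extend_apply] using (hw a).le
        · simp [Function.extend_apply' _ _ _ hb]
      · rw [sum_embedding g]
        · simpa [hinj.extend_apply] using hw1
        · intro b hb
          simp [Function.extend_apply' _ _ _ hb]
      · intro b _
        by_cases hb : ∃ a, g a = b
        · obtain ⟨a, rfl⟩ := hb
          simpa [hinj.extend_apply] using hz ⟨a, rfl⟩
        · simpa [Function.extend_apply' _ _ _ hb] using hx₀
      · simp only [f]
        rw [sum_embedding g]
        · simpa [hinj.extend_apply] using hx
        · intro b hb
          simp [Function.extend_apply' _ _ _ hb]
    · rintro _ ⟨⟨w, z⟩, ⟨⟨hw0, hw1⟩, hz⟩, rfl⟩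
      exact mem_convexHull_of_exists_fintype w z hw0 hw1 (fun i => hz i trivial) rfl
  rw [this]
  exact ((isCompact_stdSimplex ℝ _).prod (isCompact_univ_pi fun _ => hs)).image hf

/-- The squared Hilbert–Schmidt norm. -/
noncomputable def hsSq {n : Type*} [Fintype n] (M : Matrix n n ℂ) : ℝ :=
  ∑ i, ∑ j, Complex.normSq (M i j)

lemma continuous_hsSq {n : Type*} [Fintype n] : Continuous (hsSq : Matrix n n ℂ → ℝ) := by
  unfold hsSq
  refine continuous_finsetSum _ fun i _ => continuous_finsetSum _ fun j _ => ?_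
  exact Complex.continuous_normSq.comp (continuous_id.matrix_elem i j)

lemma hsSq_smul {n : Type*} [Fintype n] (r : ℝ) (M : Matrix n n ℂ) :
    hsSq ((r : ℂ) • M) = r ^ 2 * hsSq M := by
  simp only [hsSq, Finset.mul_sum, Matrix.smul_apply, smul_eq_mul, Complex.normSq_mul,
    Complex.normSq_ofReal, sq]

/-- The states are the image of the Hilbert–Schmidt unit sphere under `F ↦ Fᴴ F`. -/
lemma isCompact_states {n : Type*} [Fintype n] [DecidableEq n] :
    IsCompact {M : Matrix n n ℂ | IsState M} := by
  have htr : ∀ F : Matrix n n ℂ, (Fᴴ * F).trace = (hsSq F : ℂ) := by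
    intro F
    rw [trace, hsSq, Finset.sum_comm]
    push_cast
    refine Finset.sum_congr rfl fun i _ => ?_
    rw [diag_apply, Matrix.mul_apply]
    refine Finset.sum_congr rfl fun j _ => ?_
    rw [conjTranspose_apply, Complex.star_def, Complex.normSq_eq_conj_mul_self]
  have hset : {M : Matrix n n ℂ | IsState M} =
      (fun F : Matrix n n ℂ => Fᴴ * F) '' {F | hsSq F = 1} := by
    ext M
    constructor
    · rintro ⟨h1, h2⟩
      obtain ⟨F, rfl⟩ := exists_conjTranspose_mul_self h1
      refine ⟨F, ?_, rfl⟩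
      rw [htr] at h2
      exact_mod_cast h2
    · rintro ⟨F, hF, rfl⟩
      refine ⟨posSemidef_conjTranspose_mul_self F, ?_⟩
      rw [htr, hF, Complex.ofReal_one]
  rw [hset]
  refine IsCompact.image ?_ (by fun_prop)
  have hc : IsCompact (Set.pi Set.univ fun _ : n => Set.pi Set.univ fun _ : n =>
      Metric.closedBall (0 : ℂ) 1) :=
    isCompact_univ_pi fun _ => isCompact_univ_pi fun _ => isCompact_closedBall 0 1
  refine IsCompact.of_isClosed_subset hc (isClosed_singleton.preimage continuous_hsSq) ?_
  intro F hF i _ j _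
  have hF : hsSq F = 1 := hF
  rw [mem_closedBall_zero_iff]
  have h1 : Complex.normSq (F i j) ≤ 1 := by
    rw [← hF]
    refine (Finset.single_le_sum (f := fun j => Complex.normSq (F i j))
      (fun j _ => Complex.normSq_nonneg _) (Finset.mem_univ j)).trans ?_
    exact Finset.single_le_sum (f := fun i => ∑ j, Complex.normSq (F i j))
      (fun i _ => Finset.sum_nonneg fun j _ => Complex.normSq_nonneg _) (Finset.mem_univ i)
  rw [Complex.normSq_eq_norm_sq] at h1
  nlinarith [norm_nonneg (F i j)]

lemma normSq_identity (a b : ℂ) {α β : ℝ} (hα : 0 < α) (hβ : 0 < β) :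
    Complex.normSq a / α + Complex.normSq b / β - Complex.normSq (a + b) / (α + β) =
      Complex.normSq ((β : ℂ) * a - α * b) / (α * β * (α + β)) := by
  have : α + β ≠ 0 := by positivity
  simp only [Complex.normSq_apply, Complex.mul_re, Complex.sub_re, Complex.sub_im,
      Complex.ofReal_re, Complex.ofReal_im, Complex.mul_im, Complex.add_re, Complex.add_im]
  field_simp
  ring

/-- The perspective `(a, α) ↦ ‖a‖² / α` of the squared Hilbert–Schmidt norm is subadditive, with
equality only if `a / α` and `b / β` coincide. -/
lemma hsSq_convex {n : Type*} [Fintype n] {a b : Matrix n n ℂ} {α β : ℝ} (hα : 0 ≤ α) (hβ : 0 ≤ β)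
    (ha : α = 0 → a = 0) (hb : β = 0 → b = 0) :
    hsSq (a + b) / (α + β) ≤ hsSq a / α + hsSq b / β ∧
    (hsSq a / α + hsSq b / β ≤ hsSq (a + b) / (α + β) →
      ((α + β : ℝ) : ℂ) • a = (α : ℂ) • (a + b)) := by
  rcases hα.eq_or_lt with h | hα
  · have := ha h.symm
    subst this
    simp [← h]
  rcases hβ.eq_or_lt with h | hβ
  · have := hb h.symm
    subst this
    simp [← h]
  have key : hsSq a / α + hsSq b / β - hsSq (a + b) / (α + β) =
      hsSq ((β : ℂ) • a - (α : ℂ) • b) / (α * β * (α + β)) := by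
    simp only [hsSq, Finset.sum_div, ← Finset.sum_add_distrib, ← Finset.sum_sub_distrib,
      Matrix.add_apply, Matrix.sub_apply, Matrix.smul_apply, smul_eq_mul]
    refine Finset.sum_congr rfl fun i _ => Finset.sum_congr rfl fun j _ => ?_
    exact normSq_identity _ _ hα hβ
  have hnn : ∀ M : Matrix n n ℂ, 0 ≤ hsSq M := fun M =>
    Finset.sum_nonneg fun i _ => Finset.sum_nonneg fun j _ => Complex.normSq_nonneg _
  constructor
  · rw [← sub_nonneg, key]
    exact div_nonneg (hnn _) (by positivity)
  · intro h
    have h0 : hsSq ((β : ℂ) • a - (α : ℂ) • b) / (α * β * (α + β)) ≤ 0 := by rw [← key]; linarith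
    have h1 : hsSq ((β : ℂ) • a - (α : ℂ) • b) = 0 := by
      refine le_antisymm ?_ (hnn _)
      by_contra hc
      push Not at hc
      exact absurd h0 (not_le.2 (by positivity))
    ext i j
    have h2 := (Finset.sum_eq_zero_iff_of_nonneg (fun i _ => Finset.sum_nonneg fun j _ =>
      Complex.normSq_nonneg _)).1 h1 i (Finset.mem_univ i)
    have h3 := (Finset.sum_eq_zero_iff_of_nonneg (fun j _ =>
      Complex.normSq_nonneg _)).1 h2 j (Finset.mem_univ j)
    rw [Complex.normSq_eq_zero] at h3
    simp only [Matrix.sub_apply, Matrix.smul_apply, smul_eq_mul, Matrix.add_apply] at h3 ⊢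
    push_cast
    linear_combination h3

/-! ### Separability from a recovery map -/

section Recovery
variable {A B C : Type*} [Fintype A] [DecidableEq A] [Fintype B] [DecidableEq B]
  [Fintype C] [DecidableEq C]

/-- Partial trace over `B`. -/
noncomputable def trB : Matrix (A × B) (A × B) ℂ →ₗ[ℂ] Matrix A A ℂ where
  toFun τ := Matrix.of fun a a' => ∑ b, τ (a, b) (a', b)
  map_add' x y := by ext; simp [Finset.sum_add_distrib]
  map_smul' r x := by ext; simp [Finset.mul_sum]

/-- The unnormalised state `Tr_C[(1 ⊗ E) χ]` on `A ⊗ B` conditioned on the outcome `E` of a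
measurement on `C`. In particular `condC 1` is the partial trace over `C`. -/
noncomputable def condC (E : Matrix C C ℂ) :
    Matrix (A × B × C) (A × B × C) ℂ →ₗ[ℂ] Matrix (A × B) (A × B) ℂ where
  toFun χ := Matrix.of fun p q => ∑ c, ∑ c', E c c' * χ (p.1, p.2, c') (q.1, q.2, c)
  map_add' x y := by ext; simp [Finset.sum_add_distrib, mul_add]
  map_smul' r x := by ext; simp [Finset.mul_sum, mul_left_comm]

lemma trB_apply (τ : Matrix (A × B) (A × B) ℂ) (a a' : A) :
    trB τ a a' = ∑ b, τ (a, b) (a', b) := rfl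

lemma condC_apply (E : Matrix C C ℂ) (χ : Matrix (A × B × C) (A × B × C) ℂ) (p q : A × B) :
    condC E χ p q = ∑ c, ∑ c', E c c' * χ (p.1, p.2, c') (q.1, q.2, c) := rfl

lemma condC_add (E E' : Matrix C C ℂ) (χ : Matrix (A × B × C) (A × B × C) ℂ) :
    condC (E + E') χ = condC E χ + condC E' χ := by
  ext p q
  simp [condC_apply, Finset.sum_add_distrib, add_mul]

lemma condC_smul (r : ℂ) (E : Matrix C C ℂ) (χ : Matrix (A × B × C) (A × B × C) ℂ) :
    condC (r • E) χ = r • condC E χ := by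
  ext p q
  simp [condC_apply, Finset.mul_sum, mul_assoc]

lemma trace_trB (τ : Matrix (A × B) (A × B) ℂ) : (trB τ).trace = τ.trace := by
  simp [trace, trB_apply, Fintype.sum_prod_type]

/-- Writing `E = Fᴴ F` gives the Kraus form `∑ k, W k * χ * (W k)ᴴ`. -/
lemma condC_posSemidef {E : Matrix C C ℂ} (hE : E.PosSemidef)
    {χ : Matrix (A × B × C) (A × B × C) ℂ} (hχ : χ.PosSemidef) : (condC E χ).PosSemidef := by
  obtain ⟨F, rfl⟩ := exists_conjTranspose_mul_self hE
  let W : C → Matrix (A × B) (A × B × C) ℂ := fun k =>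
    Matrix.of fun p x => if p = (x.1, x.2.1) then F k x.2.2 else 0
  have : condC (Fᴴ * F) χ = ∑ k, W k * χ * (W k)ᴴ := by
    ext p q
    have hleft : ∀ k x, (W k * χ) p x = ∑ c', F k c' * χ (p.1, p.2, c') x := by
      intro k x
      rw [Matrix.mul_apply, Fintype.sum_prod_type, Finset.sum_eq_single p.1]
      · rw [Fintype.sum_prod_type, Finset.sum_eq_single p.2]
        · simp [W]
        · intro b _ hb
          simp [W, Prod.ext_iff, hb.symm]
        · simp
      · intro a _ ha
        refine Finset.sum_eq_zero fun x _ => ?_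
        simp [W, Prod.ext_iff, ha.symm]
      · simp
    have hright : ∀ k, (W k * χ * (W k)ᴴ) p q =
        ∑ c, (W k * χ) p (q.1, q.2, c) * star (F k c) := by
      intro k
      rw [Matrix.mul_apply, Fintype.sum_prod_type, Finset.sum_eq_single q.1]
      · rw [Fintype.sum_prod_type, Finset.sum_eq_single q.2]
        · simp [W]
        · intro b _ hb
          simp [W, Prod.ext_iff, hb.symm]
        · simp
      · intro a _ ha
        refine Finset.sum_eq_zero fun x _ => ?_
        simp [W, Prod.ext_iff, ha.symm]
      · simp
    rw [Matrix.sum_apply, condC_apply]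
    simp only [hright, hleft, Finset.sum_mul, Matrix.mul_apply, conjTranspose_apply]
    rw [Finset.sum_comm (s := (Finset.univ : Finset C)) (t := (Finset.univ : Finset C))
      (f := fun k c => ∑ c', F k c' * χ (p.1, p.2, c') (q.1, q.2, c) * star (F k c))]
    refine Finset.sum_congr rfl fun c _ => ?_
    rw [Finset.sum_comm]
    refine Finset.sum_congr rfl fun k _ => Finset.sum_congr rfl fun c' _ => ?_
    ring
  rw [this]
  exact posSemidef_sum _ fun k _ => hχ.mul_mul_conjTranspose_same (W k)

/-- Among all decompositions of `ρ` into states there is one, `∑ w i • τ i`, maximising the average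
of `‖Tr_B τ‖²`. The competitors `θ` are unnormalised, which is why their contribution is
`‖Tr_B θ‖² / Tr θ`; zero terms contribute `0 / 0 = 0`. The maximum exists because the convex hull
of the graph of `τ ↦ ‖Tr_B τ‖²` over the states is compact. -/
lemma exists_max_decomposition {ρ : Matrix (A × B) (A × B) ℂ} (hρ : IsState ρ) :
    ∃ (ι : Type) (_ : Fintype ι) (w : ι → ℝ) (τ : ι → Matrix (A × B) (A × B) ℂ),
      (∀ i, 0 ≤ w i) ∧ ∑ i, w i = 1 ∧ (∀ i, IsState (τ i)) ∧ ∑ i, (w i : ℂ) • τ i = ρ ∧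
      ∀ (κ : Type) (_ : Fintype κ) (θ : κ → Matrix (A × B) (A × B) ℂ),
        (∀ k, (θ k).PosSemidef) → ∑ k, θ k = ρ →
        ∑ k, hsSq (trB (θ k)) / (θ k).trace.re ≤ ∑ i, w i * hsSq (trB (τ i)) := by
  let f : Matrix (A × B) (A × B) ℂ → Matrix (A × B) (A × B) ℂ × ℝ := fun τ => (τ, hsSq (trB τ))
  have htrB : Continuous (trB : Matrix (A × B) (A × B) ℂ → Matrix A A ℂ) := by
    refine continuous_matrix fun a a' => ?_
    simp only [trB_apply]
    exact continuous_finsetSum _ fun b _ => continuous_id.matrix_elem _ _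
  have hf : Continuous f := continuous_id.prodMk (continuous_hsSq.comp htrB)
  let K := convexHull ℝ (f '' {τ | IsState τ})
  have hK : IsCompact K := isCompact_convexHull_of_isCompact (isCompact_states.image hf)
  have hKρ : IsCompact (K ∩ Prod.fst ⁻¹' {ρ}) :=
    hK.inter_right (isClosed_singleton.preimage continuous_fst)
  obtain ⟨⟨ρ', M⟩, ⟨hxK, hxρ⟩, hmax⟩ := hKρ.exists_isMaxOn
    ⟨f ρ, subset_convexHull ℝ _ ⟨ρ, hρ, rfl⟩, rfl⟩ (continuous_snd.continuousOn)
  obtain rfl : ρ' = ρ := hxρ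
  obtain ⟨ι, hι, w, z, hw0, hw1, hz, hsum⟩ := mem_convexHull_iff_exists_fintype.1 hxK
  choose τ hτ hτz using hz
  refine ⟨ι, hι, w, τ, hw0, hw1, hτ, ?_, ?_⟩
  · have := congrArg Prod.fst hsum
    simp only [Prod.fst_sum, Prod.smul_fst, ← hτz, f] at this
    rw [← this]
    rfl
  · intro κ _ θ hθ hθρ
    have hM : M = ∑ i, w i * hsSq (trB (τ i)) := by
      have := congrArg Prod.snd hsum
      simp only [Prod.snd_sum, Prod.smul_snd, ← hτz, f, smul_eq_mul] at this
      exact this.symm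
    rw [← hM]
    have htr : ∀ k, (((θ k).trace.re : ℝ) : ℂ) = (θ k).trace := fun k =>
      (Complex.eq_re_of_ofReal_le (r := 0) (by simpa using (hθ k).trace_nonneg)).symm
    have h0 : ∀ k, 0 ≤ (θ k).trace.re := fun k =>
      (Complex.nonneg_iff.1 (hθ k).trace_nonneg).1
    have hz0 : ∀ k, (θ k).trace.re = 0 → θ k = 0 := fun k h => by
      rw [← (hθ k).trace_eq_zero_iff, ← htr, h, Complex.ofReal_zero]
    let y : κ → Matrix (A × B) (A × B) ℂ := fun k =>
      if (θ k).trace.re = 0 then ρ' else (((θ k).trace.re)⁻¹ : ℝ) • θ k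
    have hsm : ∀ (r : ℝ) (X : Matrix (A × B) (A × B) ℂ), r • X = (r : ℂ) • X := fun r X => rfl
    have hy : ∀ k, IsState (y k) := by
      intro k
      by_cases h : (θ k).trace.re = 0
      · simpa [y, h] using hρ
      · simp only [y, h, if_false]
        refine ⟨(hθ k).smul (inv_nonneg.2 (h0 k)), ?_⟩
        rw [hsm, trace_smul, smul_eq_mul, Complex.ofReal_inv, htr k]
        exact inv_mul_cancel₀ (by rw [← htr k]; exact_mod_cast h)
    have hmem : (ρ', ∑ k, hsSq (trB (θ k)) / (θ k).trace.re) ∈ K := by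
      refine mem_convexHull_of_exists_fintype (fun k => (θ k).trace.re) (fun k => f (y k)) h0 ?_
        (fun k => ⟨y k, hy k, rfl⟩) ?_
      · have : (∑ k, θ k).trace.re = 1 := by rw [hθρ, hρ.2, Complex.one_re]
        rw [trace_sum, Complex.re_sum] at this
        exact this
      · refine Prod.ext ?_ ?_
        · simp only [Prod.fst_sum, Prod.smul_fst, f]
          rw [← hθρ]
          refine Finset.sum_congr rfl fun k _ => ?_
          by_cases h : (θ k).trace.re = 0
          · simp [hz0 k h]
          · simp only [y, h, if_false, smul_smul, mul_inv_cancel₀ h, one_smul]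
        · simp only [Prod.snd_sum, Prod.smul_snd, f, smul_eq_mul]
          refine Finset.sum_congr rfl fun k _ => ?_
          by_cases h : (θ k).trace.re = 0
          · simp [h]
          · simp only [y, h, if_false, hsm, map_smul, hsSq_smul]
            field_simp
    exact hmax ⟨hmem, rfl⟩

/-- Matrix units are linear combinations of positive semidefinite matrices. -/
lemma single_eq_polarization (c c' : C) :
    (Matrix.single c c' 1 : Matrix C C ℂ) = (1 / 4 : ℂ) •
      ∑ k : Fin 4, (Complex.I ^ (k : ℕ)) • vecMulVec
        (Pi.single c 1 + Complex.I ^ (k : ℕ) • Pi.single c' 1 : C → ℂ)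
        (star (Pi.single c 1 + Complex.I ^ (k : ℕ) • Pi.single c' 1 : C → ℂ)) := by
  ext i j
  have h1 : (Matrix.single c c' 1 : Matrix C C ℂ) i j =
      (Pi.single c 1 : C → ℂ) i * star ((Pi.single c' 1 : C → ℂ) j) := by
    by_cases hi : i = c <;> by_cases hj : j = c' <;>
      simp [Matrix.single_apply, Pi.single_apply, @eq_comm _ c i, @eq_comm _ c' j, hi, hj]
  rw [h1]
  simp only [Fin.sum_univ_four, Matrix.smul_apply, Matrix.add_apply, vecMulVec_apply, Pi.add_apply,
    Pi.smul_apply, smul_eq_mul, Pi.star_apply, star_add, star_mul', star_pow]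
  generalize (Pi.single c 1 : C → ℂ) i = x
  generalize (Pi.single c' 1 : C → ℂ) i = y
  generalize star ((Pi.single c 1 : C → ℂ) j) = x'
  generalize star ((Pi.single c' 1 : C → ℂ) j) = y'
  simp only [Complex.star_def, Complex.conj_I, Fin.val_zero, Fin.val_one, Fin.val_two,
    show ((3 : Fin 4) : ℕ) = 3 from rfl, Complex.I_pow_three, Complex.I_sq, pow_zero, pow_one,
    neg_sq, Odd.neg_pow (show Odd 3 by decide)]
  ring_nf
  simp only [Complex.I_sq, Complex.I_pow_four]
  ring

/-- If the state on `A` conditioned on any measurement outcome on `C` is always proportional to `z`,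
then the reduced operator on `A ⊗ C` is a product with first factor `z`. -/
lemma product_of_cond {χ : Matrix (A × B × C) (A × B × C) ℂ} {z : Matrix A A ℂ}
    (h : ∀ E : Matrix C C ℂ, E.PosSemidef → (1 - E).PosSemidef →
      trB (condC E χ) = (condC E χ).trace • z) :
    redAC χ = z ⊗ₖ (Matrix.of fun c c' => ∑ a, redAC χ (a, c) (a, c')) := by
  have h1 : ∀ E : Matrix C C ℂ, E.PosSemidef → trB (condC E χ) = (condC E χ).trace • z := by
    intro E hE
    obtain ⟨s, hs, hsE⟩ := exists_scale_le_one hE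
    have := h ((s : ℂ) • E) (hE.smul (by exact_mod_cast hs.le)) hsE
    rw [condC_smul, map_smul, trace_smul, smul_eq_mul, ← smul_smul] at this
    have hs' : (s : ℂ) ≠ 0 := by exact_mod_cast hs.ne'
    exact smul_right_injective _ hs' this
  have hsum : ∀ (r : Fin 4 → ℂ) (E : Fin 4 → Matrix C C ℂ),
      condC (∑ k, r k • E k) χ = ∑ k, r k • condC (E k) χ := by
    intro r E
    simp only [Fin.sum_univ_four, condC_add, condC_smul]
  have h2 : ∀ c c', trB (condC (Matrix.single c c' 1) χ) =
      (condC (Matrix.single c c' 1) χ).trace • z := by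
    intro c c'
    rw [single_eq_polarization, condC_smul, hsum]
    simp only [map_smul, map_sum, trace_smul, trace_sum, Finset.sum_smul,
      h1 _ (posSemidef_vecMulVec_self_star _), smul_eq_mul, mul_smul]
  have h3 : ∀ c c' (p q : A × B), condC (Matrix.single c c' 1) χ p q =
      χ (p.1, p.2, c') (q.1, q.2, c) := by
    intro c c' p q
    rw [condC_apply, Finset.sum_eq_single c, Finset.sum_eq_single c']
    · simp
    · intro d _ hd
      simp [hd.symm]
    · simp
    · intro d _ hd
      simp [hd.symm]
    · simp
  ext ⟨a, c⟩ ⟨a', c'⟩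
  have h4 := congrFun (congrFun (h2 c' c) a) a'
  rw [trB_apply, Matrix.smul_apply] at h4
  simp only [h3, trace, diag_apply, smul_eq_mul, Fintype.sum_prod_type] at h4
  rw [kroneckerMap_apply, mul_comm]
  exact h4

/-- If the `C` system of `ρ` can be rebuilt from `ρ^{AB}` by a positive map `R` that leaves the
marginal on `A` unchanged, then `ρ^{AC}` is separable. Take an optimal decomposition
`∑ w i • τ i` of `ρ^{AB}`. Applying `R` to the terms and measuring `{E, 1 - E}` on `C` gives a finer
decomposition of `ρ^{AB}`, which cannot improve the average of `‖Tr_B τ‖²`; by strict convexity the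
outcome is uncorrelated with `A`, so each `R (τ i)` has a product marginal on `A ⊗ C`. -/
theorem separable_of_recovery
    (R : Matrix (A × B) (A × B) ℂ →ₗ[ℂ] Matrix (A × B × C) (A × B × C) ℂ)
    (hpos : ∀ τ, τ.PosSemidef → (R τ).PosSemidef)
    (htr : ∀ τ, trB (condC 1 (R τ)) = trB τ)
    {ρ : Matrix (A × B × C) (A × B × C) ℂ} (hρ : IsState ρ) (hR : R (condC 1 ρ) = ρ) :
    ∃ (n : ℕ) (p : Fin n → ℝ) (σ : Fin n → Matrix A A ℂ) (ω : Fin n → Matrix C C ℂ),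
      (∀ i, 0 ≤ p i) ∧ (∑ i, p i = 1) ∧
      (∀ i, IsState (σ i)) ∧ (∀ i, IsState (ω i)) ∧
      redAC ρ = ∑ i, (p i : ℂ) • (σ i ⊗ₖ ω i) := by
  have htrace1 : ∀ χ : Matrix (A × B × C) (A × B × C) ℂ, (condC 1 χ).trace = χ.trace := by
    intro χ
    simp [trace, condC_apply, Fintype.sum_prod_type, Matrix.one_apply]
  have htrR : ∀ τ, (R τ).trace = τ.trace := fun τ => by
    rw [← htrace1, ← trace_trB, htr, trace_trB]
  have hρ1 : IsState (condC 1 ρ) :=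
    ⟨condC_posSemidef PosSemidef.one hρ.1, by rw [htrace1, hρ.2]⟩
  obtain ⟨ι, _, w, τ, hw0, hw1, hτ, hsum, hmax⟩ := exists_max_decomposition hρ1
  let Ω : ι → Matrix C C ℂ := fun i =>
    Matrix.of fun c c' => ∑ a, redAC (R (τ i)) (a, c) (a, c')
  have hred : ∀ χ : Matrix (A × B × C) (A × B × C) ℂ, χ.PosSemidef →
      (Matrix.of fun c c' => ∑ a, redAC χ (a, c) (a, c') : Matrix C C ℂ).PosSemidef := by
    intro χ hχ
    have : (Matrix.of fun c c' => ∑ a, redAC χ (a, c) (a, c') : Matrix C C ℂ) =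
        ∑ a, ∑ b, χ.submatrix (fun c => (a, b, c)) (fun c => (a, b, c)) := by
      ext c c'
      simp [redAC, Matrix.sum_apply]
    rw [this]
    exact posSemidef_sum _ fun a _ => posSemidef_sum _ fun b _ => hχ.submatrix _
  have hΩ : ∀ i, IsState (Ω i) := by
    intro i
    refine ⟨hred _ (hpos _ (hτ i).1), ?_⟩
    rw [← (hτ i).2, ← htrR]
    simp only [Ω, redAC, trace, diag_apply, Matrix.of_apply, Fintype.sum_prod_type]
    rw [Finset.sum_comm]
    exact Finset.sum_congr rfl fun a _ => Finset.sum_comm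
  have hmarg : ∀ i, IsState (trB (τ i)) := by
    intro i
    refine ⟨?_, by rw [trace_trB, (hτ i).2]⟩
    have : trB (τ i) = ∑ b, (τ i).submatrix (fun a => (a, b)) (fun a => (a, b)) := by
      ext a a'
      simp [trB_apply, Matrix.sum_apply]
    rw [this]
    exact posSemidef_sum _ fun b _ => (hτ i).1.submatrix _
  have hprod : ∀ i, w i ≠ 0 → redAC (R (τ i)) = trB (τ i) ⊗ₖ Ω i := by
    intro i hi
    refine product_of_cond fun E hE hE' => ?_
    let Eb : Bool → Matrix C C ℂ := fun b => if b then E else 1 - E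
    have hEb : ∀ b, (Eb b).PosSemidef := by
      intro b; cases b <;> simp [Eb, hE, hE']
    let θ : ι × Bool → Matrix (A × B) (A × B) ℂ := fun x =>
      condC (Eb x.2) (R ((w x.1 : ℂ) • τ x.1))
    have hθpos : ∀ x, (θ x).PosSemidef := fun x =>
      condC_posSemidef (hEb x.2) (hpos _ ((hτ x.1).1.smul (by exact_mod_cast hw0 x.1)))
    have hadd : ∀ χ : Matrix (A × B × C) (A × B × C) ℂ,
        condC E χ + condC (1 - E) χ = condC 1 χ := fun χ => by
      rw [← condC_add, add_sub_cancel]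
    have hθadd : ∀ j, θ (j, true) + θ (j, false) = condC 1 (R ((w j : ℂ) • τ j)) := fun j => by
      exact hadd _
    have hθsum : ∑ x, θ x = condC 1 ρ := by
      rw [Fintype.sum_prod_type]
      simp only [Fintype.sum_bool, hθadd]
      rw [← map_sum, ← map_sum, hsum, hR]
    have hle := hmax (ι × Bool) inferInstance θ hθpos hθsum
    rw [Fintype.sum_prod_type] at hle
    simp only [Fintype.sum_bool] at hle
    have hθ0 : ∀ x, 0 ≤ (θ x).trace.re := fun x =>
      (Complex.nonneg_iff.1 (hθpos x).trace_nonneg).1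
    have hθre : ∀ x, (((θ x).trace.re : ℝ) : ℂ) = (θ x).trace := fun x =>
      (Complex.eq_re_of_ofReal_le (r := 0) (by simpa using (hθpos x).trace_nonneg)).symm
    have hθz : ∀ x, (θ x).trace.re = 0 → trB (θ x) = 0 := fun x h => by
      have : θ x = 0 := by
        rw [← (hθpos x).trace_eq_zero_iff, ← hθre, h, Complex.ofReal_zero]
      rw [this, map_zero]
    have hconv := fun j => hsSq_convex (hθ0 (j, true)) (hθ0 (j, false))
      (hθz (j, true)) (hθz (j, false))
    have htrsum : ∀ j, (θ (j, true)).trace.re + (θ (j, false)).trace.re = w j := by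
      intro j
      rw [← Complex.add_re, ← trace_add, hθadd, htrace1, htrR, trace_smul, (hτ j).2]
      simp
    have hBsum : ∀ j, trB (θ (j, true)) + trB (θ (j, false)) = (w j : ℂ) • trB (τ j) := by
      intro j
      rw [← map_add, hθadd, htr, map_smul]
    have hval : ∀ j, hsSq ((w j : ℂ) • trB (τ j)) / w j = w j * hsSq (trB (τ j)) := by
      intro j
      rw [hsSq_smul]
      by_cases h : w j = 0
      · simp [h]
      · field_simp
    simp only [htrsum, hBsum, hval] at hconv
    have heq : hsSq (trB (θ (i, true))) / (θ (i, true)).trace.re +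
        hsSq (trB (θ (i, false))) / (θ (i, false)).trace.re ≤ w i * hsSq (trB (τ i)) := by
      by_contra hlt
      push Not at hlt
      exact absurd hle (not_le.2 (Finset.sum_lt_sum (fun j _ => (hconv j).1)
        ⟨i, Finset.mem_univ i, hlt⟩))
    have hfin := (hconv i).2 heq
    have hwi : (w i : ℂ) ≠ 0 := by exact_mod_cast hi
    have hθi : θ (i, true) = (w i : ℂ) • condC E (R (τ i)) := by
      simp [θ, Eb]
    rw [hθre, hθi, map_smul, trace_smul, smul_eq_mul, mul_smul] at hfin
    have h5 := smul_right_injective _ hwi hfin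
    have h6 : (w i : ℂ) • trB (condC E (R (τ i))) =
        (w i : ℂ) • ((condC E (R (τ i))).trace • trB (τ i)) := by
      rw [h5, smul_smul, smul_smul, mul_comm]
    exact smul_right_injective _ hwi h6
  let e := Fintype.equivFin ι
  refine ⟨Fintype.card ι, w ∘ e.symm, fun k => trB (τ (e.symm k)), Ω ∘ e.symm,
    fun k => hw0 _, ?_, fun k => hmarg _, fun k => hΩ _, ?_⟩
  · rw [← hw1]
    exact e.symm.sum_comp w
  · have h7 : ∑ k, (((w ∘ e.symm) k : ℝ) : ℂ) • (trB (τ (e.symm k)) ⊗ₖ (Ω ∘ e.symm) k) =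
        ∑ i, (w i : ℂ) • (trB (τ i) ⊗ₖ Ω i) :=
      e.symm.sum_comp fun i => (w i : ℂ) • (trB (τ i) ⊗ₖ Ω i)
    rw [h7]
    have h8 : ∀ i, (w i : ℂ) • (trB (τ i) ⊗ₖ Ω i) = (w i : ℂ) • redAC (R (τ i)) := by
      intro i
      by_cases h : w i = 0
      · simp [h]
      · rw [hprod i h]
    simp only [h8]
    conv_lhs => rw [← hR, ← hsum, map_sum]
    ext p q
    simp only [redAC, Matrix.of_apply, Matrix.sum_apply, map_smul, Matrix.smul_apply, smul_eq_mul,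
      Finset.mul_sum]
    rw [Finset.sum_comm]

end Recovery

/-! ### Marginals and their entropies -/

section Marginals
variable {A B C K : Type*} [Fintype A] [DecidableEq A] [Fintype B] [DecidableEq B]
  [Fintype C] [DecidableEq C] [Fintype K] [DecidableEq K]

/-- Partial trace over the first factor `A` of `A ⊗ K`. -/
def trA (χ : Matrix (A × K) (A × K) ℂ) : Matrix K K ℂ :=
  Matrix.of fun k k' => ∑ a, χ (a, k) (a, k')

lemma trA_posSemidef {χ : Matrix (A × K) (A × K) ℂ} (h : χ.PosSemidef) : (trA χ).PosSemidef := by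
  have : trA χ = ∑ a, χ.submatrix (fun k => (a, k)) (fun k => (a, k)) := by
    ext k k'
    simp [trA, Matrix.sum_apply]
  rw [this]
  exact posSemidef_sum _ fun a _ => h.submatrix _

lemma one_kronecker_unitary {U : Matrix K K ℂ} (hU : Uᴴ * U = 1) :
    ((1 : Matrix A A ℂ) ⊗ₖ U)ᴴ * ((1 : Matrix A A ℂ) ⊗ₖ U) = 1 := by
  rw [conjTranspose_kronecker, ← mul_kronecker_mul, hU, conjTranspose_one, Matrix.one_mul,
    one_kronecker_one]

lemma specMat_one_kronecker (U : Matrix K K ℂ) (f : K → ℝ) :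
    specMat ((1 : Matrix A A ℂ) ⊗ₖ U) (fun x => f x.2) = 1 ⊗ₖ specMat U f := by
  have hd : (diagonal fun x : A × K => (f x.2 : ℂ)) =
      (1 : Matrix A A ℂ) ⊗ₖ diagonal fun k => (f k : ℂ) := by
    rw [← diagonal_one, diagonal_kronecker_diagonal]
    simp
  rw [specMat, hd, conjTranspose_kronecker, ← mul_kronecker_mul, ← mul_kronecker_mul,
    conjTranspose_one, Matrix.one_mul, Matrix.one_mul, specMat]

lemma sum_diag_one_kronecker (χ : Matrix (A × K) (A × K) ℂ) (U : Matrix K K ℂ) (k : K) :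
    ∑ a, (((1 : Matrix A A ℂ) ⊗ₖ U)ᴴ * χ * ((1 : Matrix A A ℂ) ⊗ₖ U)) (a, k) (a, k) =
      (Uᴴ * trA χ * U) k k := by
  have h : ∀ a, (((1 : Matrix A A ℂ) ⊗ₖ U)ᴴ * χ * ((1 : Matrix A A ℂ) ⊗ₖ U)) (a, k) (a, k) =
      ∑ l', (∑ l, star (U l k) * χ (a, l) (a, l')) * U l' k := by
    intro a
    rw [Matrix.mul_apply, Fintype.sum_prod_type, Finset.sum_eq_single a]
    · refine Finset.sum_congr rfl fun l' _ => ?_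
      rw [kroneckerMap_apply, Matrix.one_apply_eq, one_mul]
      congr 1
      rw [Matrix.mul_apply, Fintype.sum_prod_type, Finset.sum_eq_single a]
      · simp [conjTranspose_apply, kroneckerMap_apply]
      · intro a' _ ha'
        simp [conjTranspose_apply, kroneckerMap_apply, Matrix.one_apply_ne ha']
      · simp
    · intro a' _ ha'
      simp [kroneckerMap_apply, Matrix.one_apply_ne ha']
    · simp
  simp only [h]
  rw [Finset.sum_comm, Matrix.mul_apply]
  refine Finset.sum_congr rfl fun l' _ => ?_
  rw [← Finset.sum_mul, Finset.sum_comm, Matrix.mul_apply]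
  congr 1
  refine Finset.sum_congr rfl fun l _ => ?_
  rw [← Finset.mul_sum]
  rfl

lemma diag_specMat {n : Type*} [Fintype n] [DecidableEq n] (U V : Matrix n n ℂ) (p : n → ℝ)
    (j : n) : (Uᴴ * specMat V p * U) j j =
      ((∑ i, p i * Complex.normSq ((Uᴴ * V) j i) : ℝ) : ℂ) := by
  have : Uᴴ * specMat V p * U = (Uᴴ * V) * diagonal (fun i => (p i : ℂ)) * (Uᴴ * V)ᴴ := by
    simp only [specMat, conjTranspose_mul, conjTranspose_conjTranspose, Matrix.mul_assoc]
  rw [this, Matrix.mul_apply, Complex.ofReal_sum]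
  refine Finset.sum_congr rfl fun i _ => ?_
  rw [mul_diagonal, conjTranspose_apply, Complex.ofReal_mul, ← Complex.mul_conj]
  simp only [Complex.star_def]
  ring

/-- The overlaps of the eigenvectors of `χ` with those of `1 ⊗ Tr_A χ`, weighted by the eigenvalues
of `χ`, sum to the eigenvalues of `Tr_A χ`. -/
lemma sum_overlap {χ : Matrix (A × K) (A × K) ℂ} {V : Matrix (A × K) (A × K) ℂ} {p : A × K → ℝ}
    (hχ : χ = specMat V p) {U : Matrix K K ℂ} (hU : Uᴴ * U = 1) {q : K → ℝ}
    (hq : trA χ = specMat U q) (k : K) :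
    ∑ a, ∑ i, p i * Complex.normSq ((((1 : Matrix A A ℂ) ⊗ₖ U)ᴴ * V) (a, k) i) = q k := by
  have h := sum_diag_one_kronecker χ U k
  rw [hq, hχ] at h
  simp only [diag_specMat] at h
  rw [hU] at h
  rw [← Complex.ofReal_sum] at h
  rw [Complex.ofReal_injective h]
  simp [Matrix.one_apply]

/-- The support of `χ` is contained in that of `1 ⊗ Tr_A χ`. -/
lemma overlap_eq_zero {χ : Matrix (A × K) (A × K) ℂ} {V : Matrix (A × K) (A × K) ℂ}
    {p : A × K → ℝ} (hp : ∀ i, 0 ≤ p i)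
    (hχ : χ = specMat V p) {U : Matrix K K ℂ} (hU : Uᴴ * U = 1) {q : K → ℝ}
    (hq : trA χ = specMat U q) (j i : A × K) (hj : q j.2 = 0) :
    p i * Complex.normSq ((((1 : Matrix A A ℂ) ⊗ₖ U)ᴴ * V) j i) = 0 := by
  have h := sum_overlap hχ hU hq j.2
  rw [hj] at h
  have hnn : ∀ a i, 0 ≤ p i * Complex.normSq ((((1 : Matrix A A ℂ) ⊗ₖ U)ᴴ * V) (a, j.2) i) :=
    fun a i => mul_nonneg (hp i) (Complex.normSq_nonneg _)
  rw [Finset.sum_eq_zero_iff_of_nonneg fun a _ => Finset.sum_nonneg fun i _ => hnn a i] at h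
  have h' := h j.1 (Finset.mem_univ _)
  rw [Finset.sum_eq_zero_iff_of_nonneg fun i _ => hnn _ i] at h'
  exact h' i (Finset.mem_univ _)

/-- `Tr χ log (1 ⊗ Tr_A χ) = Tr (Tr_A χ) log (Tr_A χ)`. -/
lemma sum_overlap_log {χ : Matrix (A × K) (A × K) ℂ} {V : Matrix (A × K) (A × K) ℂ}
    {p : A × K → ℝ} (hχ : χ = specMat V p) {U : Matrix K K ℂ} (hU : Uᴴ * U = 1) {q : K → ℝ}
    (hq : trA χ = specMat U q) :
    ∑ j : A × K, ∑ i, p i * Complex.normSq ((((1 : Matrix A A ℂ) ⊗ₖ U)ᴴ * V) j i) *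
      Real.log (q j.2) = ∑ k, q k * Real.log (q k) := by
  rw [Fintype.sum_prod_type_right]
  refine Finset.sum_congr rfl fun k _ => ?_
  simp only [← Finset.sum_mul]
  rw [sum_overlap hχ hU hq]

lemma vNEntropy_eq {n : Type*} [Fintype n] [DecidableEq n] {M : Matrix n n ℂ}
    (h : M.IsHermitian) :
    vNEntropy M * Real.log 2 = -∑ i, h.eigenvalues i * Real.log (h.eigenvalues i) := by
  have h2 : Real.log 2 ≠ 0 := (Real.log_pos one_lt_two).ne'
  rw [vNEntropy, dif_pos h, neg_mul, Finset.sum_mul]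
  congr 1
  refine Finset.sum_congr rfl fun i _ => ?_
  rw [Real.logb]
  field_simp

/-- The tensor product `X ⊗ D` on `A ⊗ B ⊗ C`, indexed by `A × B × C` instead of `(A × B) × C`. -/
def tensC (X : Matrix (A × B) (A × B) ℂ) (D : Matrix C C ℂ) :
    Matrix (A × B × C) (A × B × C) ℂ :=
  (X ⊗ₖ D).submatrix (Equiv.prodAssoc A B C).symm (Equiv.prodAssoc A B C).symm

lemma tensC_mul (X X' : Matrix (A × B) (A × B) ℂ) (D D' : Matrix C C ℂ) :
    tensC X D * tensC X' D' = tensC (X * X') (D * D') := by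
  rw [tensC, tensC, submatrix_mul_equiv, ← mul_kronecker_mul, tensC]

lemma tensC_apply (X : Matrix (A × B) (A × B) ℂ) (D : Matrix C C ℂ) (x y : A × B × C) :
    tensC X D x y = X (x.1, x.2.1) (y.1, y.2.1) * D x.2.2 y.2.2 := rfl

/-- The embedding `X ↦ X ⊗ 1_C` of the operators on `A ⊗ B` into those on `A ⊗ B ⊗ C`. -/
def embAB : Matrix (A × B) (A × B) ℂ →⋆ₐ[ℂ] Matrix (A × B × C) (A × B × C) ℂ where
  toFun X := tensC X 1
  map_one' := by rw [tensC, one_kronecker_one, submatrix_one_equiv]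
  map_mul' X Y := by rw [tensC_mul, Matrix.one_mul]
  map_zero' := by ext; simp [tensC_apply]
  map_add' X Y := by ext; simp [tensC_apply, add_mul]
  commutes' r := by
    rw [Algebra.algebraMap_eq_smul_one, Algebra.algebraMap_eq_smul_one, tensC, smul_kronecker,
      one_kronecker_one]
    ext x y
    simp [Matrix.one_apply, Prod.ext_iff, and_assoc]
  map_star' X := by
    simp only [star_eq_conjTranspose, tensC]
    rw [conjTranspose_submatrix, conjTranspose_kronecker, conjTranspose_one]

lemma embAB_apply (X : Matrix (A × B) (A × B) ℂ) :
    (embAB X : Matrix (A × B × C) (A × B × C) ℂ) = tensC X 1 := rfl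

lemma condC_one_apply (χ : Matrix (A × B × C) (A × B × C) ℂ) (p q : A × B) :
    condC 1 χ p q = ∑ c, χ (p.1, p.2, c) (q.1, q.2, c) := by
  simp [condC_apply, Matrix.one_apply]

/-- The partial trace over `C` is dual to `X ↦ X ⊗ 1_C`. -/
lemma trace_embAB_mul (X : Matrix (A × B) (A × B) ℂ) (χ : Matrix (A × B × C) (A × B × C) ℂ) :
    (embAB X * χ).trace = (X * condC 1 χ).trace := by
  have hl : ∀ x, ((embAB X : Matrix (A × B × C) (A × B × C) ℂ) * χ) x x =
      ∑ p : A × B, X (x.1, x.2.1) p * χ (p.1, p.2, x.2.2) x := by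
    intro x
    rw [Matrix.mul_apply, ← (Equiv.prodAssoc A B C).sum_comp, Fintype.sum_prod_type]
    refine Finset.sum_congr rfl fun p _ => ?_
    rw [Finset.sum_eq_single x.2.2]
    · simp [embAB_apply, tensC_apply]
    · intro c _ hc
      simp [embAB_apply, tensC_apply, Matrix.one_apply_ne hc.symm]
    · simp
  simp only [trace, diag_apply, hl]
  rw [← (Equiv.prodAssoc A B C).sum_comp, Fintype.sum_prod_type]
  refine Finset.sum_congr rfl fun p _ => ?_
  rw [Finset.sum_comm, Matrix.mul_apply]
  refine Finset.sum_congr rfl fun q _ => ?_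
  rw [condC_one_apply, Finset.mul_sum]
  rfl

lemma condC_one_kronecker (M : Matrix (B × C) (B × C) ℂ) :
    condC 1 ((1 : Matrix A A ℂ) ⊗ₖ M) =
      (1 : Matrix A A ℂ) ⊗ₖ (Matrix.of fun b b' => ∑ c, M (b, c) (b', c)) := by
  ext p q
  rw [condC_one_apply]
  simp [kroneckerMap_apply, Finset.mul_sum]

/-- The partial trace over `B` is dual to `Z ↦ Z ⊗ 1_B`. -/
lemma trace_mul_trB (Z : Matrix A A ℂ) (τ : Matrix (A × B) (A × B) ℂ) :
    (Z * trB τ).trace = ((Z ⊗ₖ (1 : Matrix B B ℂ)) * τ).trace := by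
  simp only [trace, diag_apply, Matrix.mul_apply, trB_apply, Fintype.sum_prod_type,
    kroneckerMap_apply, Finset.mul_sum, Matrix.one_apply]
  refine Finset.sum_congr rfl fun a _ => ?_
  rw [Finset.sum_comm]
  refine Finset.sum_congr rfl fun b _ => Finset.sum_congr rfl fun a' _ => ?_
  simp

lemma embAB_kronecker_one (Z : Matrix A A ℂ) :
    (embAB (Z ⊗ₖ (1 : Matrix B B ℂ)) : Matrix (A × B × C) (A × B × C) ℂ) =
      Z ⊗ₖ (1 : Matrix (B × C) (B × C) ℂ) := by
  ext ⟨a, b, c⟩ ⟨a', b', c'⟩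
  simp only [embAB_apply, tensC_apply, kroneckerMap_apply, mul_assoc, Matrix.one_apply,
    Prod.ext_iff]
  by_cases hb : b = b' <;> by_cases hc : c = c' <;> simp [hb, hc]

lemma condC_one_tensC (X : Matrix (A × B) (A × B) ℂ) {D : Matrix C C ℂ} (hD : D.trace = 1) :
    condC 1 (tensC X D) = X := by
  ext p q
  rw [condC_one_apply]
  simp only [tensC_apply, ← Finset.mul_sum]
  rw [show ∑ c, D c c = 1 from hD, mul_one]

end Marginals

/-! ### The Petz recovery map -/

section Petz
variable {A B C : Type*} [Fintype A] [DecidableEq A] [Fintype B] [DecidableEq B]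
  [Fintype C] [DecidableEq C]

/-- The Petz recovery map in abstract form: `τ ↦ S (TτT ⊗ 1_C) S + QτQ ⊗ |c₀⟩⟨c₀|`. It is used with
`S = 1 ⊗ √ρ_BC`, `T = 1 ⊗ ρ_B^(-1/2)` and `Q` the projection onto the kernel of `1 ⊗ ρ_B`; the
second summand makes the map trace preserving. -/
noncomputable def petzMap (S : Matrix (A × B × C) (A × B × C) ℂ) (T Q : Matrix (A × B) (A × B) ℂ)
    (c₀ : C) : Matrix (A × B) (A × B) ℂ →ₗ[ℂ] Matrix (A × B × C) (A × B × C) ℂ where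
  toFun τ := S * embAB (T * τ * T) * S + tensC (Q * τ * Q) (Matrix.single c₀ c₀ 1)
  map_add' x y := by
    have : ∀ (X Y : Matrix (A × B) (A × B) ℂ) (D : Matrix C C ℂ),
        tensC (X + Y) D = tensC X D + tensC Y D := fun X Y D => by
      ext; simp [tensC_apply, add_mul]
    simp only [Matrix.mul_add, Matrix.add_mul, map_add, this]
    abel
  map_smul' r x := by
    have : ∀ (X : Matrix (A × B) (A × B) ℂ) (D : Matrix C C ℂ),
        tensC (r • X) D = r • tensC X D := fun X D => by
      ext; simp [tensC_apply, mul_assoc]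
    simp only [Matrix.mul_smul, Matrix.smul_mul, map_smul, this, smul_add, RingHom.id_apply]

lemma tensC_posSemidef {X : Matrix (A × B) (A × B) ℂ} {D : Matrix C C ℂ} (hX : X.PosSemidef)
    (hD : D.PosSemidef) : (tensC X D).PosSemidef :=
  (hX.kronecker hD).submatrix _

lemma single_posSemidef (c₀ : C) : (Matrix.single c₀ c₀ (1 : ℂ)).PosSemidef := by
  rw [← Matrix.diagonal_single]
  refine PosSemidef.diagonal fun i => ?_
  by_cases h : i = c₀
  · subst h; simp
  · simp [h]

lemma petzMap_posSemidef {S : Matrix (A × B × C) (A × B × C) ℂ} {T Q : Matrix (A × B) (A × B) ℂ}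
    {c₀ : C} (hS : Sᴴ = S) (hT : Tᴴ = T) (hQ : Qᴴ = Q) {τ : Matrix (A × B) (A × B) ℂ}
    (hτ : τ.PosSemidef) : (petzMap S T Q c₀ τ).PosSemidef := by
  have h1 : (T * τ * T).PosSemidef := by
    simpa only [hT] using hτ.mul_mul_conjTranspose_same T
  have h2 : (Q * τ * Q).PosSemidef := by
    simpa only [hQ] using hτ.mul_mul_conjTranspose_same Q
  have h3 : (S * embAB (T * τ * T) * S).PosSemidef := by
    simpa only [hS, embAB_apply] using
      (tensC_posSemidef h1 (PosSemidef.one (n := C))).mul_mul_conjTranspose_same S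
  exact h3.add (tensC_posSemidef h2 (single_posSemidef c₀))

/-- The Petz map acts only on `B`, producing `B ⊗ C`, and so preserves the marginal on `A`.
Here `G`, `r`, `t` and `π` stand for `√ρ_BC`, `ρ_B`, `ρ_B^(-1/2)` and the support projection
of `ρ_B`. -/
lemma trB_petzMap {G : Matrix (B × C) (B × C) ℂ} {t r π : Matrix B B ℂ} {c₀ : C}
    (hG : (Matrix.of fun b b' => ∑ c, (G * G) (b, c) (b', c)) = r)
    (htrt : t * r * t = π) (hπ : (1 - π) * (1 - π) = 1 - π) (τ : Matrix (A × B) (A × B) ℂ) :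
    trB (condC 1 (petzMap ((1 : Matrix A A ℂ) ⊗ₖ G) (1 ⊗ₖ t) (1 ⊗ₖ (1 - π)) c₀ τ)) = trB τ := by
  rw [ext_iff_trace_mul_left]
  intro Z
  set T : Matrix (A × B) (A × B) ℂ := (1 : Matrix A A ℂ) ⊗ₖ t with hT
  set Q : Matrix (A × B) (A × B) ℂ := (1 : Matrix A A ℂ) ⊗ₖ (1 - π) with hQ
  set S : Matrix (A × B × C) (A × B × C) ℂ := (1 : Matrix A A ℂ) ⊗ₖ G with hS
  set ZZ : Matrix (A × B) (A × B) ℂ := Z ⊗ₖ (1 : Matrix B B ℂ) with hZZ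
  have hcomm : ∀ x : Matrix B B ℂ, ZZ * (1 ⊗ₖ x) = (1 ⊗ₖ x) * ZZ := fun x => by
    simp only [hZZ, ← mul_kronecker_mul, Matrix.one_mul, Matrix.mul_one]
  have hcommS : embAB ZZ * S = S * embAB ZZ := by
    simp only [hZZ, embAB_kronecker_one, hS, ← mul_kronecker_mul, Matrix.one_mul, Matrix.mul_one]
  have hSS : condC 1 (S * S) = (1 : Matrix A A ℂ) ⊗ₖ r := by
    rw [hS, ← mul_kronecker_mul, Matrix.one_mul, condC_one_kronecker, hG]
  have h1 : (embAB ZZ * (S * embAB (T * τ * T) * S)).trace =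
      (ZZ * ((1 : Matrix A A ℂ) ⊗ₖ π) * τ).trace := by
    have e1 : (embAB ZZ * (S * embAB (T * τ * T) * S)).trace =
        (embAB (ZZ * (T * τ * T)) * (S * S)).trace := by
      rw [Matrix.mul_assoc, ← Matrix.mul_assoc, hcommS, Matrix.mul_assoc, trace_mul_comm S,
        map_mul _ ZZ]
      simp only [Matrix.mul_assoc]
    rw [e1, trace_embAB_mul, hSS]
    have e2 : (ZZ * (T * τ * T) * ((1 : Matrix A A ℂ) ⊗ₖ r)).trace =
        (T * (1 ⊗ₖ r) * (ZZ * T) * τ).trace := by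
      have : ZZ * (T * τ * T) * ((1 : Matrix A A ℂ) ⊗ₖ r) =
        (ZZ * T * τ) * (T * ((1 : Matrix A A ℂ) ⊗ₖ r)) := by simp only [Matrix.mul_assoc]
      rw [this, trace_mul_comm]
      simp only [Matrix.mul_assoc]
    rw [e2, hT, hcomm, hcomm, ← htrt]
    simp only [← Matrix.mul_assoc, ← mul_kronecker_mul, Matrix.one_mul]
  have h2 : (embAB ZZ * tensC (Q * τ * Q) (Matrix.single c₀ c₀ 1)).trace =
      (ZZ * ((1 : Matrix A A ℂ) ⊗ₖ (1 - π)) * τ).trace := by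
    rw [trace_embAB_mul, condC_one_tensC _ (by simp), ← Matrix.mul_assoc, trace_mul_comm]
    have : Q * (ZZ * (Q * τ)) = (ZZ * ((1 : Matrix A A ℂ) ⊗ₖ (1 - π)) * τ) := by
      rw [← Matrix.mul_assoc, hQ, ← hcomm]
      simp only [Matrix.mul_assoc]
      rw [← Matrix.mul_assoc (1 ⊗ₖ (1 - π)) (1 ⊗ₖ (1 - π)) τ, ← mul_kronecker_mul, hπ,
        Matrix.one_mul]
    rw [this]
  rw [trace_mul_trB, trace_mul_trB, ← hZZ, ← trace_embAB_mul]
  change (embAB ZZ * (S * embAB (T * τ * T) * S +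
    tensC (Q * τ * Q) (Matrix.single c₀ c₀ 1))).trace = _
  rw [Matrix.mul_add, trace_add, h1, h2, ← trace_add, ← Matrix.add_mul, ← Matrix.mul_add,
    ← kronecker_add, add_sub_cancel, one_kronecker_one, Matrix.mul_one]

/-- Saturation of strong subadditivity makes the Petz map recover `ρ` from `ρ^{AB}`. With `Y` from
`exists_sqrt_intertwiner`, `ρ^{AB} = (1 ⊗ √ρ_B) Y Yᴴ (1 ⊗ √ρ_B)` while
`ρ = S (Y Yᴴ ⊗ 1_C) S` for `S = 1 ⊗ √ρ_BC`. -/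
theorem exists_recovery {ρ : Matrix (A × B × C) (A × B × C) ℂ} (hρ : IsState ρ)
    (hsat : S3AB ρ + S3BC ρ - S3ABC ρ - S3B ρ = 0) :
    ∃ R : Matrix (A × B) (A × B) ℂ →ₗ[ℂ] Matrix (A × B × C) (A × B × C) ℂ,
      (∀ τ, τ.PosSemidef → (R τ).PosSemidef) ∧
      (∀ τ, trB (condC 1 (R τ)) = trB τ) ∧ R (condC 1 ρ) = ρ := by
  have hAB : (condC 1 ρ).PosSemidef := condC_posSemidef PosSemidef.one hρ.1
  have hBC : (trA ρ).PosSemidef := trA_posSemidef hρ.1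
  have hB : (trA (condC 1 ρ)).PosSemidef := trA_posSemidef hAB
  have hmargB : (Matrix.of fun b b' => ∑ c, trA ρ (b, c) (b', c)) = trA (condC 1 ρ) := by
    ext b b'
    simp only [trA, Matrix.of_apply, condC_one_apply]
    rw [Finset.sum_comm]
  obtain ⟨c₀⟩ : Nonempty C := by
    by_contra h
    rw [not_nonempty_iff] at h
    have := hρ.2
    simp [trace] at this
  have eABC := vNEntropy_eq hρ.1.1
  have h0AB : S3AB ρ = vNEntropy (condC 1 ρ) := by
    rw [S3AB]; congr 1; ext p q; rw [condC_one_apply]; rfl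
  have eAB := vNEntropy_eq hAB.1
  rw [← h0AB] at eAB
  have eBC : S3BC ρ * Real.log 2 = _ := vNEntropy_eq hBC.1
  have h0B : S3B ρ = vNEntropy (trA (condC 1 ρ)) := by
    rw [S3B]; congr 1; ext b b'; simp only [trA, condC_one_apply]
  have eB := vNEntropy_eq hB.1
  rw [← h0B] at eB
  have uABC := eigenvectorMat_unitary hρ.1.1
  have uAB := eigenvectorMat_unitary hAB.1
  have uBC := eigenvectorMat_unitary hBC.1
  have uB := eigenvectorMat_unitary hB.1
  have sABC := eq_specMat hρ.1.1
  have sAB := eq_specMat hAB.1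
  have sBC := eq_specMat hBC.1
  have sB := eq_specMat hB.1
  have nABC := hρ.1.eigenvalues_nonneg
  have nAB := hAB.eigenvalues_nonneg
  have nBC := hBC.eigenvalues_nonneg
  have nB := hB.eigenvalues_nonneg
  have tABC := hρ.1.1.trace_eq_sum_eigenvalues
  have tAB := hAB.1.trace_eq_sum_eigenvalues
  change vNEntropy ρ * Real.log 2 = _ at eABC
  change S3AB ρ + S3BC ρ - vNEntropy ρ - S3B ρ = 0 at hsat
  generalize (hρ.1.1.eigenvectorUnitary : Matrix (A × B × C) (A × B × C) ℂ) = V at *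
  generalize (hAB.1.eigenvectorUnitary : Matrix (A × B) (A × B) ℂ) = V' at *
  generalize (hBC.1.eigenvectorUnitary : Matrix (B × C) (B × C) ℂ) = U at *
  generalize (hB.1.eigenvectorUnitary : Matrix B B ℂ) = U' at *
  generalize hρ.1.1.eigenvalues = p at *
  generalize hAB.1.eigenvalues = p' at *
  generalize hBC.1.eigenvalues = q at *
  generalize hB.1.eigenvalues = q' at *
  have hsum : ∑ i, p i = ∑ i, p' i := by
    have : (condC 1 ρ).trace = ρ.trace := by
      have := trace_embAB_mul (1 : Matrix (A × B) (A × B) ℂ) ρ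
      rw [map_one, Matrix.one_mul, Matrix.one_mul] at this
      exact this.symm
    rw [tABC, tAB] at this
    exact_mod_cast this.symm
  obtain ⟨Y, hY', hY⟩ := exists_sqrt_intertwiner (embAB (A := A) (B := B) (C := C))
    (U := (1 : Matrix A A ℂ) ⊗ₖ U) (V := V) (U' := (1 : Matrix A A ℂ) ⊗ₖ U') (V' := V')
    (one_kronecker_unitary uBC) uABC (one_kronecker_unitary uB) uAB
    (q := fun x => q x.2) (p := p) (q' := fun x => q' x.2) (p' := p')
    (fun x => nBC x.2) nABC (fun x => nB x.2) nAB
    (overlap_eq_zero nABC sABC uBC sBC) (overlap_eq_zero nAB sAB uB sB)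
    (fun X => by
      rw [trace_embAB_mul, specMat_one_kronecker, specMat_one_kronecker, condC_one_kronecker,
        ← sBC, ← sB, hmargB])
    (fun X => by rw [trace_embAB_mul, ← sABC, ← sAB]) hsum
    (by
      rw [sum_overlap_log sABC uBC sBC, sum_overlap_log sAB uB sB]
      linear_combination Real.log 2 * hsat - eAB - eBC + eABC + eB)
  -- The square root `s` of `ρ_B`, its pseudo-inverse `t` (zero on the kernel since `0⁻¹ = 0`),
  -- the support projection `π`, and the square root `G` of `ρ_BC`.
  set s := specMat U' fun j => Real.sqrt (q' j) with hs
  set t := specMat U' fun j => (Real.sqrt (q' j))⁻¹ with ht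
  set π := specMat U' fun j => Real.sqrt (q' j) * (Real.sqrt (q' j))⁻¹ with hπdef
  set G := specMat U fun j => Real.sqrt (q j) with hG
  have hst : s * t = π := specMat_mul uB _ _
  have hts : t * s = π := by
    rw [ht, hs, specMat_mul uB, hπdef]
    simp only [mul_comm]
  have hss : s * s = trA (condC 1 ρ) := by
    rw [hs, specMat_mul uB, sB]
    simp only [Real.mul_self_sqrt (nB _)]
  have hGG : G * G = trA ρ := by
    rw [hG, specMat_mul uBC, sBC]
    simp only [Real.mul_self_sqrt (nBC _)]
  have hππ : π * π = π := by
    rw [hπdef, specMat_mul uB]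
    congr 1
    ext j
    by_cases h : Real.sqrt (q' j) = 0
    · simp [h]
    · simp [mul_inv_cancel₀ h]
  have hπs : π * s = s := by
    rw [hπdef, hs, specMat_mul uB]
    congr 1
    ext j
    by_cases h : Real.sqrt (q' j) = 0
    · simp [h]
    · simp [mul_inv_cancel₀ h]
  have hπ1 : (1 - π) * (1 - π) = 1 - π := by
    rw [Matrix.mul_sub, Matrix.sub_mul, Matrix.sub_mul, hππ]
    simp
  have hsH : sᴴ = s := specMat_conjTranspose _
  have htH : tᴴ = t := specMat_conjTranspose _
  have hπH : πᴴ = π := specMat_conjTranspose _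
  have hGH : Gᴴ = G := specMat_conjTranspose _
  have hrt : t * trA (condC 1 ρ) * t = π := by
    rw [← hss, ← Matrix.mul_assoc, hts, Matrix.mul_assoc, hst, hππ]
  rw [specMat_one_kronecker U' fun j => Real.sqrt (q' j)] at hY'
  rw [specMat_one_kronecker U fun j => Real.sqrt (q j)] at hY
  rw [← hs] at hY'
  rw [← hG] at hY
  set S : Matrix (A × B × C) (A × B × C) ℂ := (1 : Matrix A A ℂ) ⊗ₖ G with hS
  have hSH : Sᴴ = S := by rw [hS, conjTranspose_kronecker, conjTranspose_one, hGH]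
  have hQH : ((1 : Matrix A A ℂ) ⊗ₖ (1 - π))ᴴ = 1 ⊗ₖ (1 - π) := by
    rw [conjTranspose_kronecker, conjTranspose_one, conjTranspose_sub, conjTranspose_one, hπH]
  refine ⟨petzMap S (1 ⊗ₖ t) (1 ⊗ₖ (1 - π)) c₀, fun τ hτ => petzMap_posSemidef hSH ?_ hQH hτ,
    trB_petzMap (by rw [hGG, hmargB]) hrt hπ1, ?_⟩
  · rw [conjTranspose_kronecker, conjTranspose_one, htH]
  -- The support of `ρ_BC` lies in that of `ρ_B ⊗ 1`, as `Tr (1 - π) ρ_B = 0`.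
  have hSQ : S * embAB ((1 : Matrix A A ℂ) ⊗ₖ (1 - π)) = 0 := by
    rw [← trace_conjTranspose_mul_self_eq_zero_iff, conjTranspose_mul, hSH, ← star_eq_conjTranspose,
      ← map_star, star_eq_conjTranspose, hQH]
    have e : embAB ((1 : Matrix A A ℂ) ⊗ₖ (1 - π)) * S *
        (S * embAB ((1 : Matrix A A ℂ) ⊗ₖ (1 - π))) =
        embAB ((1 : Matrix A A ℂ) ⊗ₖ (1 - π)) * (S * S) *
          embAB ((1 : Matrix A A ℂ) ⊗ₖ (1 - π)) := by
      simp only [Matrix.mul_assoc]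
    rw [e, trace_mul_comm, ← Matrix.mul_assoc, ← map_mul, ← mul_kronecker_mul, hπ1,
      trace_embAB_mul, hS, ← mul_kronecker_mul, hGG, Matrix.one_mul, condC_one_kronecker, hmargB,
      ← mul_kronecker_mul, ← hss, ← Matrix.mul_assoc, Matrix.sub_mul, hπs]
    simp
  have hSP : S * embAB ((1 : Matrix A A ℂ) ⊗ₖ π) = S := by
    have : ((1 : Matrix A A ℂ) ⊗ₖ π) = 1 - (1 : Matrix A A ℂ) ⊗ₖ (1 - π) := by
      rw [eq_sub_iff_add_eq, ← kronecker_add, add_sub_cancel, one_kronecker_one]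
    rw [this, map_sub, map_one, Matrix.mul_sub, hSQ, Matrix.mul_one, sub_zero]
  have hPS : embAB ((1 : Matrix A A ℂ) ⊗ₖ π) * S = S := by
    have := congrArg conjTranspose hSP
    rwa [conjTranspose_mul, hSH, ← star_eq_conjTranspose, ← map_star, star_eq_conjTranspose,
      conjTranspose_kronecker, conjTranspose_one, hπH] at this
  have hρAB : condC 1 ρ = (1 ⊗ₖ s) * Y * (Yᴴ * (1 ⊗ₖ s)) := by
    have h1 : Yᴴ * ((1 : Matrix A A ℂ) ⊗ₖ s) = ((1 ⊗ₖ s) * Y)ᴴ := by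
      rw [conjTranspose_mul, conjTranspose_kronecker, conjTranspose_one, hsH]
    rw [h1, hY', specMat_conjTranspose, specMat_mul uAB]
    simp only [Real.mul_self_sqrt (nAB _)]
    exact sAB
  have hρABC : ρ = S * embAB Y * (embAB Yᴴ * S) := by
    have h1 : embAB Yᴴ * S = (S * embAB Y)ᴴ := by
      rw [conjTranspose_mul, hSH, ← star_eq_conjTranspose, ← star_eq_conjTranspose, map_star]
    rw [h1, hY, specMat_conjTranspose, specMat_mul uABC]
    simp only [Real.mul_self_sqrt (nABC _)]
    exact sABC
  have hQρ : ((1 : Matrix A A ℂ) ⊗ₖ (1 - π)) * condC 1 ρ = 0 := by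
    rw [hρAB, Matrix.mul_assoc, ← Matrix.mul_assoc, ← mul_kronecker_mul, Matrix.sub_mul, hπs]
    simp
  have hTρT : ((1 : Matrix A A ℂ) ⊗ₖ t) * condC 1 ρ * (1 ⊗ₖ t) =
      (1 ⊗ₖ π) * Y * (Yᴴ * (1 ⊗ₖ π)) := by
    have h1 : ((1 : Matrix A A ℂ) ⊗ₖ t) * ((1 ⊗ₖ s) * Y * (Yᴴ * (1 ⊗ₖ s))) * (1 ⊗ₖ t) =
        ((1 ⊗ₖ t) * (1 ⊗ₖ s)) * Y * (Yᴴ * ((1 ⊗ₖ s) * (1 ⊗ₖ t))) := by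
      simp only [Matrix.mul_assoc]
    rw [hρAB, h1, ← mul_kronecker_mul, ← mul_kronecker_mul, hts, hst, Matrix.one_mul]
  change S * embAB (((1 : Matrix A A ℂ) ⊗ₖ t) * condC 1 ρ * (1 ⊗ₖ t)) * S +
    tensC (((1 : Matrix A A ℂ) ⊗ₖ (1 - π)) * condC 1 ρ * (1 ⊗ₖ (1 - π))) _ = ρ
  have hz : (tensC 0 (Matrix.single c₀ c₀ 1) : Matrix (A × B × C) (A × B × C) ℂ) = 0 := by
    ext; simp [tensC_apply]
  rw [hQρ, Matrix.zero_mul, hz, add_zero, hTρT, map_mul, map_mul, map_mul]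
  have h2 : S * (embAB ((1 : Matrix A A ℂ) ⊗ₖ π) * embAB Y *
      (embAB Yᴴ * embAB ((1 : Matrix A A ℂ) ⊗ₖ π))) * S =
      (S * embAB ((1 : Matrix A A ℂ) ⊗ₖ π)) * embAB Y *
      (embAB Yᴴ * (embAB ((1 : Matrix A A ℂ) ⊗ₖ π) * S)) := by
    simp only [Matrix.mul_assoc]
  rw [h2, hSP, hPS, ← hρABC]

end Petz

end Proof

/-- **Separability of `ρ^{AC}`.** If a tripartite state saturates strong
subadditivity at pivot `B`, i.e. `I(A;C|B) = 0`, then the reduced state on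
`A ⊗ C` is separable: a finite convex combination of product states. -/
theorem reduced_state_separable_of_saturated_SSA
    {A B C : Type*} [Fintype A] [DecidableEq A] [Fintype B] [DecidableEq B]
    [Fintype C] [DecidableEq C]
    (ρ : Matrix (A × B × C) (A × B × C) ℂ) (hρ : IsState ρ)
    (hsat : S3AB ρ + S3BC ρ - S3ABC ρ - S3B ρ = 0) :
    ∃ (n : ℕ) (p : Fin n → ℝ) (σ : Fin n → Matrix A A ℂ) (ω : Fin n → Matrix C C ℂ),
      (∀ i, 0 ≤ p i) ∧ (∑ i, p i = 1) ∧
      (∀ i, IsState (σ i)) ∧ (∀ i, IsState (ω i)) ∧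
      redAC ρ = ∑ i, (p i : ℂ) • (σ i ⊗ₖ ω i) := by
  obtain ⟨R, hpos, htr, hR⟩ := exists_recovery hρ hsat
  exact separable_of_recovery R hpos htr hρ hR
end

section
/- For each n, the topological closure of the set of entropy vectors {(S(ρ^X))_{∅ ≠ X ⊆ {1,…,n}} : ρ a state of an n-partite quantum system on finite-dimensional Hilbert spaces} is a convex cone in ℝ^{2^n − 1}: it is closed under addition and under multiplication by nonnegative real scalars. -/
/-!
The set of entropy vectors is closed under three operations, realised by constructions on states.

* Tensor products: `S((ρ ⊗ σ)^X) = S(ρ^X) + S(σ^X)`, so entropy vectors may be added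
  (`add_mem_entropyVectors`); hence the closure is closed under addition.
* The one-dimensional state has entropy vector `0` (`zero_mem_entropyVectors`).
* Locally orthogonal mixtures: place `ρ` and `σ` on complementary local subspaces of dimensions
  `d i` and `d' i` inside dimension `d i + d' i`. For nonempty `X` the marginals still have
  orthogonal supports, so the mixture with weights `p, q` has `X`-entropy
  `p S(ρ^X) + q S(σ^X) + h(p)`, with `h` the binary entropy (`mix_mem_entropyVectors`).

Mixing `ρ^{⊗ ⌊c / p⌋}` with weight `p` and the trivial state with weight `1 - p` gives the vector
`p ⌊c / p⌋ v + h(p) (1, …, 1)`, which tends to `c v` as `p → 0`. Multiplication by `c` is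
continuous, so the closure is closed under nonnegative scaling too.

All entropy computations rest on `vNEntropy_isometry_diagonal`: for an isometry `W` the entropy of
`W diag(l) Wᴴ` is the Shannon entropy of `l`.
-/

open scoped BigOperators ComplexOrder

/-- The reduced (marginal) state of an `n`-partite state `ρ` on the parties in `X`,
obtained by tracing out the parties outside `X`. -/
noncomputable def marginal {n : ℕ} {d : Fin n → ℕ} (X : Finset (Fin n))
    (ρ : Matrix (∀ i, Fin (d i)) (∀ i, Fin (d i)) ℂ) :
    Matrix (∀ i : X, Fin (d i)) (∀ i : X, Fin (d i)) ℂ :=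
  Matrix.of fun f f' =>
    ∑ g : ∀ i : {i : Fin n // i ∉ X}, Fin (d i),
      ρ (fun i => if h : i ∈ X then f ⟨i, h⟩ else g ⟨i, h⟩)
        (fun i => if h : i ∈ X then f' ⟨i, h⟩ else g ⟨i, h⟩)

/-- The entropy vector of an `n`-partite state: the von Neumann entropies of all
`2ⁿ - 1` nonempty marginals. -/
noncomputable def entropyVector {n : ℕ} {d : Fin n → ℕ}
    (ρ : Matrix (∀ i, Fin (d i)) (∀ i, Fin (d i)) ℂ) :
    {X : Finset (Fin n) // X.Nonempty} → ℝ :=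
  fun X => vNEntropy (marginal X.1 ρ)

/-- The set of entropy vectors of `n`-partite states on finite-dimensional
Hilbert spaces (of arbitrary finite dimensions). -/
def entropyVectors (n : ℕ) : Set ({X : Finset (Fin n) // X.Nonempty} → ℝ) :=
  {v | ∃ (d : Fin n → ℕ) (ρ : Matrix (∀ i, Fin (d i)) (∀ i, Fin (d i)) ℂ),
        ρ.PosSemidef ∧ ρ.trace = 1 ∧ v = entropyVector ρ}

open Matrix Kronecker

/-! ### Entropy from a spectral decomposition -/

/-- For a Hermitian matrix the entropy is a sum over the roots of the characteristic polynomial. -/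
lemma vNEntropy_eq_roots {m : Type*} [Fintype m] [DecidableEq m] {M : Matrix m m ℂ}
    (h : M.IsHermitian) :
    vNEntropy M = -(M.charpoly.roots.map fun z : ℂ => z.re * Real.logb 2 z.re).sum := by
  rw [vNEntropy, dif_pos h, h.roots_charpoly_eq_eigenvalues, Multiset.map_map]
  rfl

/-- If `W` is an isometry, the entropy of `W diag(l) Wᴴ` is the Shannon entropy of `l`: the
characteristic polynomial of this matrix agrees with that of `diag(l)` up to powers of `X`, and
eigenvalues `0` do not contribute. -/
lemma vNEntropy_isometry_diagonal {m k : Type*} [Fintype m] [DecidableEq m] [Fintype k]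
    [DecidableEq k] (W : Matrix m k ℂ) (hW : Wᴴ * W = 1) (l : k → ℝ) :
    vNEntropy (W * diagonal (fun i => (l i : ℂ)) * Wᴴ) = -∑ i, l i * Real.logb 2 (l i) := by
  have hD : (diagonal (fun i => (l i : ℂ))).IsHermitian := by
    refine isHermitian_diagonal_of_self_adjoint _ ?_
    ext i
    simp
  have hM : (W * diagonal (fun i => (l i : ℂ)) * Wᴴ).IsHermitian :=
    isHermitian_mul_mul_conjTranspose W hD
  rw [vNEntropy_eq_roots hM]
  have key := charpoly_mul_comm' (W * diagonal (fun i => (l i : ℂ))) Wᴴ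
  rw [← Matrix.mul_assoc, hW, Matrix.one_mul, charpoly_diagonal] at key
  have key2 := congrArg
    (fun p => (p.roots.map fun z : ℂ => z.re * Real.logb 2 z.re).sum) key
  rw [Polynomial.roots_mul (mul_ne_zero (pow_ne_zero _ Polynomial.X_ne_zero)
      (charpoly_monic _).ne_zero),
    Polynomial.roots_mul (mul_ne_zero (pow_ne_zero _ Polynomial.X_ne_zero)
      (Polynomial.monic_prod_X_sub_C _ _).ne_zero), Polynomial.roots_prod _ _
      (Polynomial.monic_prod_X_sub_C _ _).ne_zero] at key2
  simpa [Multiset.map_nsmul, Multiset.sum_nsmul] using key2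

/-- A Hermitian matrix is `U diag(l) Uᴴ` with `U` an isometry and `l` real. -/
lemma exists_spectral {m : Type*} [Fintype m] [DecidableEq m] {M : Matrix m m ℂ}
    (h : M.IsHermitian) :
    ∃ (U : Matrix m m ℂ) (l : m → ℝ), Uᴴ * U = 1 ∧ M = U * diagonal (fun i => (l i : ℂ)) * Uᴴ := by
  refine ⟨h.eigenvectorUnitary, h.eigenvalues, ?_, ?_⟩
  · exact Unitary.coe_star_mul_self h.eigenvectorUnitary
  · have := h.spectral_theorem
    rw [Unitary.conjStarAlgAut_apply] at this
    exact this

/-- The trace of `W diag(l) Wᴴ` for an isometry `W`. -/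
lemma trace_isometry_diagonal {m k : Type*} [Fintype m] [Fintype k]
    [DecidableEq k] (W : Matrix m k ℂ) (hW : Wᴴ * W = 1) (l : k → ℝ) :
    (W * diagonal (fun i => (l i : ℂ)) * Wᴴ).trace = ((∑ i, l i : ℝ) : ℂ) := by
  rw [trace_mul_comm, ← Matrix.mul_assoc, hW, Matrix.one_mul, trace_diagonal]
  simp

/-- Entropy is invariant under isometries. -/
lemma vNEntropy_isometry {m k : Type*} [Fintype m] [DecidableEq m] [Fintype k]
    [DecidableEq k] (W : Matrix m k ℂ) (hW : Wᴴ * W = 1) {M : Matrix k k ℂ} (h : M.IsHermitian) :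
    vNEntropy (W * M * Wᴴ) = vNEntropy M := by
  obtain ⟨U, l, hU, rfl⟩ := exists_spectral h
  rw [vNEntropy_isometry_diagonal U hU l]
  rw [← vNEntropy_isometry_diagonal (W * U) _ l]
  · simp only [conjTranspose_mul, Matrix.mul_assoc]
  · rw [conjTranspose_mul, Matrix.mul_assoc, ← Matrix.mul_assoc Wᴴ, hW, Matrix.one_mul, hU]

lemma mul_logb_mul (a b : ℝ) : a * b * Real.logb 2 (a * b)
    = a * Real.logb 2 a * b + a * (b * Real.logb 2 b) := by
  rcases eq_or_ne a 0 with rfl | ha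
  · simp
  rcases eq_or_ne b 0 with rfl | hb
  · simp
  rw [Real.logb_mul ha hb]
  ring

/-- Additivity of entropy on tensor products. -/
lemma vNEntropy_kronecker {m k : Type*} [Fintype m] [DecidableEq m] [Fintype k]
    [DecidableEq k] {M : Matrix m m ℂ} {N : Matrix k k ℂ} (hM : M.IsHermitian)
    (hN : N.IsHermitian) (tM : M.trace = 1) (tN : N.trace = 1) :
    vNEntropy (M ⊗ₖ N) = vNEntropy M + vNEntropy N := by
  obtain ⟨U, l, hU, rfl⟩ := exists_spectral hM
  obtain ⟨V, r, hV, rfl⟩ := exists_spectral hN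
  rw [trace_isometry_diagonal _ hU] at tM
  rw [trace_isometry_diagonal _ hV] at tN
  replace tM : ∑ i, l i = 1 := by exact_mod_cast tM
  replace tN : ∑ i, r i = 1 := by exact_mod_cast tN
  have hUV : (U ⊗ₖ V)ᴴ * (U ⊗ₖ V) = 1 := by
    rw [conjTranspose_kronecker, ← mul_kronecker_mul, hU, hV, one_kronecker_one]
  have e : (U * diagonal (fun i => (l i : ℂ)) * Uᴴ) ⊗ₖ (V * diagonal (fun i => (r i : ℂ)) * Vᴴ)
      = (U ⊗ₖ V) * diagonal (fun i : m × k => ((l i.1 * r i.2 : ℝ) : ℂ)) * (U ⊗ₖ V)ᴴ := by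
    rw [mul_kronecker_mul, mul_kronecker_mul, diagonal_kronecker_diagonal, conjTranspose_kronecker]
    simp
  rw [e, vNEntropy_isometry_diagonal _ hUV, vNEntropy_isometry_diagonal _ hU,
    vNEntropy_isometry_diagonal _ hV, ← neg_add, Fintype.sum_prod_type]
  congr 1
  simp_rw [mul_logb_mul, Finset.sum_add_distrib, ← Finset.mul_sum, ← Finset.sum_mul, tM, tN]
  simp

/-- The binary entropy of a pair of weights. -/
noncomputable def mixEntropy (p q : ℝ) : ℝ := -(p * Real.logb 2 p + q * Real.logb 2 q)

/-- The entropy of a mixture of two states with orthogonal supports. The orthogonality is encoded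
by isometries `E`, `F` with orthogonal ranges. -/
lemma vNEntropy_orthogonal_mix {m k k' : Type*} [Fintype m] [DecidableEq m] [Fintype k]
    [DecidableEq k] [Fintype k'] [DecidableEq k'] (E : Matrix m k ℂ) (F : Matrix m k' ℂ)
    (hE : Eᴴ * E = 1) (hF : Fᴴ * F = 1) (hEF : Eᴴ * F = 0)
    {M : Matrix k k ℂ} {N : Matrix k' k' ℂ} (hM : M.IsHermitian)
    (hN : N.IsHermitian) (tM : M.trace = 1) (tN : N.trace = 1) (p q : ℝ) :
    vNEntropy ((p : ℂ) • (E * M * Eᴴ) + (q : ℂ) • (F * N * Fᴴ))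
      = p * vNEntropy M + q * vNEntropy N + mixEntropy p q := by
  obtain ⟨U, l, hU, rfl⟩ := exists_spectral hM
  obtain ⟨V, r, hV, rfl⟩ := exists_spectral hN
  rw [trace_isometry_diagonal _ hU] at tM
  rw [trace_isometry_diagonal _ hV] at tN
  replace tM : ∑ i, l i = 1 := by exact_mod_cast tM
  replace tN : ∑ i, r i = 1 := by exact_mod_cast tN
  have hFE : Fᴴ * E = 0 := by
    have := congrArg conjTranspose hEF
    simpa using this
  have hW : (fromCols (E * U) (F * V))ᴴ * fromCols (E * U) (F * V) = 1 := by
    have a1 : (E * U)ᴴ * (E * U) = 1 := by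
      rw [conjTranspose_mul, Matrix.mul_assoc, ← Matrix.mul_assoc Eᴴ, hE, Matrix.one_mul, hU]
    have a2 : (F * V)ᴴ * (F * V) = 1 := by
      rw [conjTranspose_mul, Matrix.mul_assoc, ← Matrix.mul_assoc Fᴴ, hF, Matrix.one_mul, hV]
    have a3 : (E * U)ᴴ * (F * V) = 0 := by
      rw [conjTranspose_mul, Matrix.mul_assoc, ← Matrix.mul_assoc Eᴴ, hEF]
      simp
    have a4 : (F * V)ᴴ * (E * U) = 0 := by
      rw [conjTranspose_mul, Matrix.mul_assoc, ← Matrix.mul_assoc Fᴴ, hFE]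
      simp
    rw [conjTranspose_fromCols_eq_fromRows_conjTranspose, fromRows_mul_fromCols, a1, a2, a3, a4,
      fromBlocks_one]
  have e : (p : ℂ) • (E * (U * diagonal (fun i => (l i : ℂ)) * Uᴴ) * Eᴴ)
      + (q : ℂ) • (F * (V * diagonal (fun i => (r i : ℂ)) * Vᴴ) * Fᴴ)
      = fromCols (E * U) (F * V)
        * diagonal (fun i => ((Sum.elim (fun i => p * l i) (fun i => q * r i) i : ℝ) : ℂ))
        * (fromCols (E * U) (F * V))ᴴ := by
    have hd : diagonal (fun i => ((Sum.elim (fun i => p * l i) (fun i => q * r i) i : ℝ) : ℂ))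
        = fromBlocks ((p : ℂ) • diagonal (fun i => (l i : ℂ))) 0 0
            ((q : ℂ) • diagonal (fun i => (r i : ℂ))) := by
      rw [← diagonal_smul, ← diagonal_smul, fromBlocks_diagonal]
      congr 1
      ext i
      rcases i with i | i <;> simp
    rw [hd, conjTranspose_fromCols_eq_fromRows_conjTranspose, fromCols_mul_fromBlocks,
      fromCols_mul_fromRows]
    simp [Matrix.mul_assoc]
  rw [e, vNEntropy_isometry_diagonal _ hW, vNEntropy_isometry_diagonal _ hU,
    vNEntropy_isometry_diagonal _ hV, Fintype.sum_sum_type]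
  simp only [Sum.elim_inl, Sum.elim_inr, mul_logb_mul, Finset.sum_add_distrib, ← Finset.mul_sum, tM, tN,
    mixEntropy]
  ring

/-! ### Marginals -/

lemma marginal_isHermitian {n : ℕ} {d : Fin n → ℕ} (X : Finset (Fin n))
    {ρ : Matrix (∀ i, Fin (d i)) (∀ i, Fin (d i)) ℂ} (h : ρ.IsHermitian) :
    (marginal X ρ).IsHermitian := by
  ext f f'
  simp only [marginal, conjTranspose_apply, of_apply, star_sum]
  exact Finset.sum_congr rfl fun g _ => h.apply _ _

lemma marginal_trace {n : ℕ} {d : Fin n → ℕ} (X : Finset (Fin n))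
    (ρ : Matrix (∀ i, Fin (d i)) (∀ i, Fin (d i)) ℂ) :
    (marginal X ρ).trace = ρ.trace := by
  simp only [trace, diag_apply, marginal, of_apply]
  rw [← Fintype.sum_prod_type']
  exact Fintype.sum_equiv (Equiv.piEquivPiSubtypeProd (· ∈ X) (fun i => Fin (d i))).symm _ _
    fun _ => rfl

lemma marginal_mix {n : ℕ} {d : Fin n → ℕ} (X : Finset (Fin n))
    (ρ σ : Matrix (∀ i, Fin (d i)) (∀ i, Fin (d i)) ℂ) (p q : ℂ) :
    marginal X (p • ρ + q • σ) = p • marginal X ρ + q • marginal X σ := by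
  ext f f'
  simp [marginal, Finset.sum_add_distrib, Finset.mul_sum]

/-! ### Embedding a basis into a larger one -/

/-- The matrix sending the basis vector `a` to the basis vector `e a`. -/
def incl {k m : Type*} [DecidableEq m] (e : k → m) : Matrix m k ℂ :=
  (1 : Matrix m m ℂ).submatrix id e

lemma incl_isometry {k m : Type*} [DecidableEq m] [Fintype m] [DecidableEq k] {e : k → m}
    (he : Function.Injective e) : (incl e)ᴴ * incl e = 1 := by
  ext a b
  simp [incl, mul_apply, one_apply, he.eq_iff, apply_ite]

lemma incl_orthogonal {k k' m : Type*} [DecidableEq m] [Fintype m] {e : k → m} {e' : k' → m}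
    (h : ∀ a b, e a ≠ e' b) : (incl e)ᴴ * incl e' = 0 := by
  ext a b
  simp [incl, mul_apply, one_apply, h, apply_ite]

lemma incl_conj_apply {k m : Type*} [DecidableEq m] [Fintype m] [Fintype k] (e : k → m)
    (N : Matrix k k ℂ) (x y : m) :
    (incl e * N * (incl e)ᴴ) x y
      = ∑ b, (∑ a, if x = e a then N a b else 0) * if e b = y then 1 else 0 := by
  simp [incl, mul_apply, one_apply, apply_ite]

lemma incl_conj_apply_of_mem {k m : Type*} [DecidableEq m] [Fintype m] [Fintype k] {e : k → m}
    (he : Function.Injective e) (N : Matrix k k ℂ) (a b : k) :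
    (incl e * N * (incl e)ᴴ) (e a) (e b) = N a b := by
  classical
  simp [incl_conj_apply, he.eq_iff]

lemma incl_conj_apply_left {k m : Type*} [DecidableEq m] [Fintype m] [Fintype k] {e : k → m}
    (N : Matrix k k ℂ) {x : m} (y : m) (hx : x ∉ Set.range e) :
    (incl e * N * (incl e)ᴴ) x y = 0 := by
  have : ∀ a, x ≠ e a := fun a h => hx ⟨a, h.symm⟩
  simp [incl_conj_apply, this]

lemma incl_conj_apply_right {k m : Type*} [DecidableEq m] [Fintype m] [Fintype k] {e : k → m}
    (N : Matrix k k ℂ) (x : m) {y : m} (hy : y ∉ Set.range e) :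
    (incl e * N * (incl e)ᴴ) x y = 0 := by
  have : ∀ a, e a ≠ y := fun a h => hy ⟨a, h⟩
  simp [incl_conj_apply, this]

/-- Local embeddings of the parties commute with taking marginals. -/
lemma marginal_incl {n : ℕ} {d d' : Fin n → ℕ} (φ : ∀ i, Fin (d i) → Fin (d' i))
    (hφ : ∀ i, Function.Injective (φ i)) (X : Finset (Fin n))
    (ρ : Matrix (∀ i, Fin (d i)) (∀ i, Fin (d i)) ℂ) :
    marginal X (incl (Pi.map φ) * ρ * (incl (Pi.map φ))ᴴ)
      = incl (Pi.map fun i : X => φ i) * marginal X ρ * (incl (Pi.map fun i : X => φ i))ᴴ := by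
  have hΦ : Function.Injective (Pi.map φ) := Function.Injective.piMap hφ
  have hX : Function.Injective (Pi.map fun i : X => φ i) := Function.Injective.piMap fun i => hφ i
  -- a configuration glued from parts on and off `X` is in the image only if both parts are
  have mem (f : ∀ i : X, Fin (d' i)) (g : ∀ i : {i : Fin n // i ∉ X}, Fin (d' i))
      (h : (fun i => if h : i ∈ X then f ⟨i, h⟩ else g ⟨i, h⟩) ∈ Set.range (Pi.map φ)) :
      f ∈ Set.range (Pi.map fun i : X => φ i) ∧
        g ∈ Set.range (Pi.map fun i : {i : Fin n // i ∉ X} => φ i) := by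
    obtain ⟨a, ha⟩ := h
    refine ⟨⟨fun i => a i, ?_⟩, ⟨fun i => a i, ?_⟩⟩
    · ext1 i
      have := congrFun ha i
      simpa [i.2] using this
    · ext1 i
      have := congrFun ha i
      simpa [i.2] using this
  have glue (a : ∀ i : X, Fin (d i)) (c : ∀ i : {i : Fin n // i ∉ X}, Fin (d i)) :
      (fun i => if h : i ∈ X then (Pi.map (fun i : X => φ i) a) ⟨i, h⟩
        else (Pi.map (fun i : {i : Fin n // i ∉ X} => φ i) c) ⟨i, h⟩)
      = Pi.map φ (fun i => if h : i ∈ X then a ⟨i, h⟩ else c ⟨i, h⟩) := by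
    ext1 i
    by_cases h : i ∈ X <;> simp [h]
  ext f f'
  by_cases hf : f ∈ Set.range (Pi.map fun i : X => φ i)
  swap
  · rw [incl_conj_apply_left _ _ hf]
    exact Finset.sum_eq_zero fun g _ =>
      incl_conj_apply_left _ _ fun h => hf (mem _ _ h).1
  by_cases hf' : f' ∈ Set.range (Pi.map fun i : X => φ i)
  swap
  · rw [incl_conj_apply_right _ _ hf']
    exact Finset.sum_eq_zero fun g _ =>
      incl_conj_apply_right _ _ fun h => hf' (mem _ _ h).1
  obtain ⟨a, rfl⟩ := hf
  obtain ⟨b, rfl⟩ := hf'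
  rw [incl_conj_apply_of_mem hX]
  symm
  refine Fintype.sum_of_injective (Pi.map fun i : {i : Fin n // i ∉ X} => φ i)
    (Function.Injective.piMap fun i => hφ i) _ _ ?_ ?_
  · intro g hg
    exact incl_conj_apply_left _ _ fun h => hg (mem _ _ h).2
  · intro c
    rw [glue, glue, incl_conj_apply_of_mem hΦ]

/-! ### Operations on the set of entropy vectors -/

/-- The one-dimensional state has entropy vector `0`. -/
lemma zero_mem_entropyVectors (n : ℕ) : (0 : {X : Finset (Fin n) // X.Nonempty} → ℝ) ∈ entropyVectors n := by
  refine ⟨fun _ => 1, 1, PosSemidef.one, by simp, ?_⟩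
  ext X
  have h1 : marginal X.1 (1 : Matrix (∀ _ : Fin n, Fin 1) (∀ _ : Fin n, Fin 1) ℂ)
      = 1 * diagonal (fun _ => ((1 : ℝ) : ℂ)) * 1ᴴ := by
    ext f f'
    simp [marginal, Subsingleton.elim f f', one_apply]
  rw [entropyVector, h1, vNEntropy_isometry_diagonal 1 (by simp)]
  simp

/-- Regrouping of the local pairs of basis labels of a tensor product. -/
def pairEquiv {ι : Type*} (d d' : ι → ℕ) :
    (∀ i, Fin (d i * d' i)) ≃ (∀ i, Fin (d i)) × (∀ i, Fin (d' i)) :=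
  (Equiv.piCongrRight fun _ => finProdFinEquiv.symm).trans (Equiv.arrowProdEquivProdArrow _ _ _)

lemma submatrix_equiv_eq {m k : Type*} [DecidableEq m] [Fintype m] [Fintype k] (e : m ≃ k)
    (N : Matrix k k ℂ) :
    N.submatrix e e = incl e.symm * N * (incl e.symm)ᴴ := by
  ext x y
  obtain ⟨a, rfl⟩ := e.symm.surjective x
  obtain ⟨b, rfl⟩ := e.symm.surjective y
  rw [incl_conj_apply_of_mem e.symm.injective]
  simp

/-- Tensor products of states add entropy vectors. -/
lemma add_mem_entropyVectors {n : ℕ} {v w : {X : Finset (Fin n) // X.Nonempty} → ℝ}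
    (hv : v ∈ entropyVectors n) (hw : w ∈ entropyVectors n) : v + w ∈ entropyVectors n := by
  obtain ⟨d, ρ, hρ, tρ, rfl⟩ := hv
  obtain ⟨d', σ, hσ, tσ, rfl⟩ := hw
  refine ⟨fun i => d i * d' i, (ρ ⊗ₖ σ).submatrix (pairEquiv d d') (pairEquiv d d'),
    (hρ.kronecker hσ).submatrix _, ?_, ?_⟩
  · have : ((ρ ⊗ₖ σ).submatrix (pairEquiv d d') (pairEquiv d d')).trace = (ρ ⊗ₖ σ).trace :=
      Fintype.sum_equiv (pairEquiv d d') _ _ fun _ => rfl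
    rw [this, trace_kronecker, tρ, tσ, mul_one]
  ext X
  have hm : marginal X.1 ((ρ ⊗ₖ σ).submatrix (pairEquiv d d') (pairEquiv d d'))
      = (marginal X.1 ρ ⊗ₖ marginal X.1 σ).submatrix
        (pairEquiv (fun i : X.1 => d i) (fun i : X.1 => d' i))
        (pairEquiv (fun i : X.1 => d i) (fun i : X.1 => d' i)) := by
    have glue (f : ∀ i : X.1, Fin (d i * d' i))
        (g : ∀ i : {i : Fin n // i ∉ X.1}, Fin (d i * d' i)) :
        pairEquiv d d' (fun i => if h : i ∈ X.1 then f ⟨i, h⟩ else g ⟨i, h⟩)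
        = ((fun i => if h : i ∈ X.1 then (pairEquiv _ _ f).1 ⟨i, h⟩
              else (pairEquiv _ _ g).1 ⟨i, h⟩),
           (fun i => if h : i ∈ X.1 then (pairEquiv _ _ f).2 ⟨i, h⟩
              else (pairEquiv _ _ g).2 ⟨i, h⟩)) := by
      ext i <;> by_cases h : i ∈ X.1 <;>
        simp [pairEquiv, Equiv.arrowProdEquivProdArrow, h]
    ext f f'
    simp only [marginal, of_apply, submatrix_apply, kroneckerMap_apply, glue]
    rw [Finset.sum_mul_sum, ← Fintype.sum_prod_type']
    exact Fintype.sum_equiv (pairEquiv _ _) _ _ fun _ => rfl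
  have hM := marginal_isHermitian X.1 hρ.isHermitian
  have hN := marginal_isHermitian X.1 hσ.isHermitian
  have hMN : (marginal X.1 ρ ⊗ₖ marginal X.1 σ).IsHermitian := by
    rw [IsHermitian, conjTranspose_kronecker, hM.eq, hN.eq]
  rw [Pi.add_apply, entropyVector, entropyVector, entropyVector, hm, submatrix_equiv_eq,
    vNEntropy_isometry _ (incl_isometry (Equiv.injective _)) hMN,
    vNEntropy_kronecker hM hN (by rw [marginal_trace, tρ]) (by rw [marginal_trace, tσ])]

/-- Mixing two states supported on locally orthogonal subspaces. -/
lemma mix_mem_entropyVectors {n : ℕ} {v w : {X : Finset (Fin n) // X.Nonempty} → ℝ}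
    (hv : v ∈ entropyVectors n) (hw : w ∈ entropyVectors n) {p q : ℝ} (hp : 0 ≤ p) (hq : 0 ≤ q)
    (hpq : p + q = 1) :
    p • v + q • w + (fun _ => mixEntropy p q) ∈ entropyVectors n := by
  obtain ⟨d, ρ, hρ, tρ, rfl⟩ := hv
  obtain ⟨d', σ, hσ, tσ, rfl⟩ := hw
  let φ (i : Fin n) : Fin (d i) → Fin (d i + d' i) := Fin.castAdd (d' i)
  let ψ (i : Fin n) : Fin (d' i) → Fin (d i + d' i) := Fin.natAdd (d i)
  have hφ i : Function.Injective (φ i) := Fin.castAdd_injective _ _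
  have hψ i : Function.Injective (ψ i) := Fin.natAdd_injective _ _
  have hφψ i a b : φ i a ≠ ψ i b := by
    intro h
    have := congrArg Fin.val h
    simp only [φ, ψ, Fin.val_castAdd, Fin.val_natAdd] at this
    omega
  have tr {e : Fin n → ℕ} (θ : ∀ i, Fin (e i) → Fin (d i + d' i))
      (hθ : ∀ i, Function.Injective (θ i)) (τ : Matrix (∀ i, Fin (e i)) (∀ i, Fin (e i)) ℂ) :
      (incl (Pi.map θ) * τ * (incl (Pi.map θ))ᴴ).trace = τ.trace := by
    rw [trace_mul_comm, ← Matrix.mul_assoc, incl_isometry (Function.Injective.piMap hθ),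
      Matrix.one_mul]
  refine ⟨fun i => d i + d' i, (p : ℂ) • (incl (Pi.map φ) * ρ * (incl (Pi.map φ))ᴴ)
    + (q : ℂ) • (incl (Pi.map ψ) * σ * (incl (Pi.map ψ))ᴴ), ?_, ?_, ?_⟩
  · exact ((hρ.mul_mul_conjTranspose_same _).smul (by exact_mod_cast hp)).add
      ((hσ.mul_mul_conjTranspose_same _).smul (by exact_mod_cast hq))
  · rw [trace_add, trace_smul, trace_smul, tr φ hφ, tr ψ hψ, tρ, tσ]
    simp only [smul_eq_mul, mul_one]
    exact_mod_cast hpq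
  ext X
  obtain ⟨i₀, hi₀⟩ := X.2
  rw [entropyVector, marginal_mix, marginal_incl φ hφ, marginal_incl ψ hψ,
    vNEntropy_orthogonal_mix _ _ (incl_isometry (Function.Injective.piMap fun i : X.1 => hφ i))
      (incl_isometry (Function.Injective.piMap fun i : X.1 => hψ i))
      -- orthogonality needs a party in `X`
      (incl_orthogonal fun a b h => hφψ i₀ _ _ (congrFun h (⟨i₀, hi₀⟩ : X.1)))
      (marginal_isHermitian X.1 hρ.isHermitian) (marginal_isHermitian X.1 hσ.isHermitian)
      (by rw [marginal_trace, tρ]) (by rw [marginal_trace, tσ])]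
  rfl

lemma nsmul_mem_entropyVectors {n : ℕ} {v : {X : Finset (Fin n) // X.Nonempty} → ℝ}
    (hv : v ∈ entropyVectors n) (k : ℕ) : (k : ℝ) • v ∈ entropyVectors n := by
  induction k with
  | zero => simpa using zero_mem_entropyVectors n
  | succ k ih =>
    rw [Nat.cast_succ, add_smul, one_smul]
    exact add_mem_entropyVectors ih hv

open Filter Topology

/-- Nonnegative multiples of entropy vectors are limits of the entropy vectors of
`p ρ^{⊗ ⌊c / p⌋} ⊕ (1 - p) |0⟩⟨0|` with `p = 1 / m` and `m → ∞`. -/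
lemma smul_mem_closure_entropyVectors {n : ℕ} {v : {X : Finset (Fin n) // X.Nonempty} → ℝ}
    (hv : v ∈ entropyVectors n) {c : ℝ} (hc : 0 ≤ c) : c • v ∈ closure (entropyVectors n) := by
  have hp : Tendsto (fun m : ℕ => ((m : ℝ))⁻¹) atTop (𝓝 0) := tendsto_inv_atTop_nhds_zero_nat
  have hfloor : Tendsto (fun m : ℕ => ((m : ℝ))⁻¹ * (⌊c * m⌋₊ : ℝ)) atTop (𝓝 c) := by
    have := (tendsto_nat_floor_mul_div_atTop hc).comp (tendsto_natCast_atTop_atTop (R := ℝ))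
    refine this.congr fun m => ?_
    simp [div_eq_inv_mul]
  have hcont : Continuous fun p : ℝ => mixEntropy p (1 - p) := by
    have e : (fun p : ℝ => mixEntropy p (1 - p))
        = fun p => -((p * Real.log p + (1 - p) * Real.log (1 - p)) / Real.log 2) := by
      ext p
      simp only [mixEntropy, Real.logb]
      ring
    rw [e]
    have := Real.continuous_mul_log
    exact ((this.add (this.comp (by fun_prop : Continuous fun p : ℝ => 1 - p))).div_const _).neg
  have hmix : Tendsto (fun m : ℕ => mixEntropy ((m : ℝ))⁻¹ (1 - ((m : ℝ))⁻¹)) atTop (𝓝 0) := by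
    have := (hcont.tendsto 0).comp hp
    rwa [show mixEntropy 0 (1 - 0) = 0 by simp [mixEntropy]] at this
  have hlim : Tendsto (fun m : ℕ => ((m : ℝ))⁻¹ • ((⌊c * m⌋₊ : ℝ) • v)
      + (1 - ((m : ℝ))⁻¹) • (0 : {X : Finset (Fin n) // X.Nonempty} → ℝ)
      + (fun _ => mixEntropy ((m : ℝ))⁻¹ (1 - ((m : ℝ))⁻¹))) atTop (𝓝 (c • v)) := by
    rw [tendsto_pi_nhds]
    intro X
    have := (hfloor.mul_const (v X)).add hmix
    simpa [mul_assoc] using this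
  refine mem_closure_of_tendsto hlim (Eventually.of_forall fun m => ?_)
  exact mix_mem_entropyVectors (nsmul_mem_entropyVectors hv _) (zero_mem_entropyVectors n)
    (by positivity) (sub_nonneg.2 (Nat.cast_inv_le_one m)) (add_sub_cancel _ _)

/-- **The quantum entropy cone.** For each `n`, the topological closure of the set of
entropy vectors of `n`-partite states is a convex cone in `ℝ^{2ⁿ-1}`: it is closed
under addition and under multiplication by nonnegative real scalars. -/
theorem entropy_cone_is_convex_cone (n : ℕ) :
    (∀ v w, v ∈ closure (entropyVectors n) → w ∈ closure (entropyVectors n) →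
      v + w ∈ closure (entropyVectors n)) ∧
    (∀ (c : ℝ) v, 0 ≤ c → v ∈ closure (entropyVectors n) →
      c • v ∈ closure (entropyVectors n)) := by
  refine ⟨fun v w hv hw => ?_, fun c v hc hv => ?_⟩
  · exact map_mem_closure₂ continuous_add hv hw fun a ha b hb => add_mem_entropyVectors ha hb
  · have h := map_mem_closure (continuous_const_smul c) hv
      fun a ha => smul_mem_closure_entropyVectors ha hc
    rwa [closure_closure] at h
end
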